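/- arXiv:1801.10485 — 2 statements merged into one kernel-verified Lean document; each statement's English description precedes it below -/
import Mathlib

section
/- Let X be a smooth projective variety over ℂ and let ℰ ∈ D^b(X) be a ℙ^d-object with associated ℙ^d-twist P_ℰ. Then P_ℰ(ℰ) ≅ ℰ[-2d]. -/
open CategoryTheory CategoryTheory.Limits CategoryTheory.Pretriangulated Filter

universe v u

variable (C : Type u) [Category.{v} C] [Preadditive C] [HasZeroObject C]
  [HasShift C ℤ] [∀ n : ℤ, (shiftFunctor C n).Additive] [Pretriangulated C]
  [HasFiniteBiproducts C] [CategoryTheory.Linear ℂ C]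
  [∀ X Y : C, Module.Finite ℂ (X ⟶ Y)]

/-- `BuildVal E t B r` : the object `B` can be built from the zero object by a tower of
`k` distinguished triangles whose successive cones are shifts `E⟦nᵢ⟧` of `E`,
with total weight `r = ∑ᵢ exp(nᵢ t)`. -/
inductive BuildVal (E : C) (t : ℝ) : C → ℝ → Prop
  | zero (Z : C) (hZ : IsZero Z) : BuildVal E t Z 0
  | step (A B : C) (n : ℤ) (r : ℝ)
      (f : A ⟶ B) (g : B ⟶ (shiftFunctor C n).obj E)
      (h : (shiftFunctor C n).obj E ⟶ (shiftFunctor C (1 : ℤ)).obj A)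
      (hT : Triangle.mk f g h ∈ distTriang C)
      (hA : BuildVal E t A r) :
      BuildVal E t B (r + Real.exp ((n : ℝ) * t))

/-- The set of weights `∑ᵢ exp(nᵢ t)` of towers of distinguished triangles with cones
shifts of `E`, ending at an object isomorphic to `F ⊕ F'` for some `F'`. -/
def complexitySet (E F : C) (t : ℝ) : Set ℝ :=
  {r | ∃ B F' : C, BuildVal C E t B r ∧ Nonempty (B ≅ F ⊞ F')}

/-- The complexity `δ_t(E, F)` of `F` relative to `E` (Dimitrov–Haiden–Katzarkov–Kontsevich). -/
noncomputable def complexity (E F : C) (t : ℝ) : ℝ :=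
  sInf (complexitySet C E F t)

/-- `F` lies in the split closure `⟨E⟩` of `E` (expressed via towers). -/
def InSplitClosure (E F : C) : Prop :=
  (complexitySet C E F 0).Nonempty

/-- `G` is a split generator of the triangulated category. -/
def IsSplitGenerator (G : C) : Prop :=
  ∀ F : C, InSplitClosure C G F

/-- The right orthogonal `E^⊥ = {F : Hom^*(E,F) = 0}`. -/
def rightOrthogonal (E : C) : Set C :=
  {F | ∀ (n : ℤ) (f : E ⟶ (shiftFunctor C n).obj F), f = 0}

/-- A `ℙ^d`-object in a ℂ-linear triangulated category (an abstract model of a `ℙ^d`-object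
in `D^b(X)` for `X` smooth projective of dimension `2d` over `ℂ`, in the sense of
Huybrechts–Thomas): `E` is a `2d`-Calabi–Yau object (the Serre-duality reformulation of
`E ⊗ ω_X ≅ E`) and the graded ring `Hom^*(E,E)` is isomorphic to
`H^*(ℙ^d; ℂ) = ℂ[h]/(h^{d+1})`, `deg h = 2`: the graded pieces `Hom^{2k}(E,E)`, `0 ≤ k ≤ d`,
are one-dimensional, spanned by the powers `h^k`, and all other graded pieces vanish. -/
structure PdObject (d : ℕ) where
  E : C
  nonzero : ¬ IsZero E
  /-- Serre-duality form of `E ⊗ ω_X ≅ E` on a `2d`-dimensional variety: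
  `Hom(E, F) ≅ Hom(F, E[2d])^∨` for every `F`. -/
  CY : ∀ F : C, (E ⟶ F) ≃ₗ[ℂ] Module.Dual ℂ (F ⟶ (shiftFunctor C (2 * (d : ℤ))).obj E)
  /-- a generator `h ∈ Hom²(E, E)`. -/
  h : E ⟶ (shiftFunctor C (2 : ℤ)).obj E
  /-- the powers `h^k ∈ Hom^{2k}(E, E)` of `h`. -/
  hpow : ∀ k : ℕ, (E ⟶ (shiftFunctor C (2 * (k : ℤ))).obj E)
  hpow_zero : hpow 0 = (shiftFunctorZero' C (2 * ((0 : ℕ) : ℤ)) (by simp)).inv.app E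
  hpow_succ : ∀ k : ℕ,
    hpow (k + 1) = h ≫ (shiftFunctor C (2 : ℤ)).map (hpow k) ≫
      (shiftFunctorAdd' C (2 * (k : ℤ)) (2 : ℤ) (2 * ((k + 1 : ℕ) : ℤ))
        (by push_cast; ring)).inv.app E
  /-- `Hom^{2k}(E,E)` is one-dimensional for `0 ≤ k ≤ d`. -/
  hom_rank_one : ∀ k : ℕ, k ≤ d →
    Module.finrank ℂ (E ⟶ (shiftFunctor C (2 * (k : ℤ))).obj E) = 1
  /-- all other graded pieces of `Hom^*(E,E)` vanish. -/
  hom_rank_zero : ∀ n : ℤ, (¬ ∃ k : ℕ, k ≤ d ∧ n = 2 * (k : ℤ)) →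
    ∀ f : E ⟶ (shiftFunctor C n).obj E, f = 0
  /-- the powers `h^k`, `k ≤ d`, are nonzero (so they span the graded pieces). -/
  hpow_ne_zero : ∀ k : ℕ, k ≤ d → hpow k ≠ 0

/-- The `ℙ^d`-twist `P_E` associated to a `ℙ^d`-object `E` (Huybrechts–Thomas):
an autoequivalence `P` such that each `P(F)` is obtained by the double cone construction
`P(F) = Cone(Cone(Hom^{*-2}(E,F) ⊗ E → Hom^*(E,F) ⊗ E) → F)`.
Here `H F` models the object `Hom^*(E,F) ⊗ E`, i.e. the finite direct sum of shifts
`E[-n]` with multiplicity `dim Hom^n(E,F)`, so that `Hom^{*-2}(E,F) ⊗ E = (H F)[-2]`;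
`θ F` models the map `h^∨·id − id·h`; `T F` models its cone; and `P F` is the cone of
the induced evaluation map `T F → F`. -/
structure PdTwist (d : ℕ) extends PdObject C d where
  /-- the twist autoequivalence. -/
  P : C ≌ C
  /-- the twist commutes with the shift functors. -/
  commShift : P.functor.CommShift ℤ
  /-- `H F` models `Hom^*(E,F) ⊗ E`. -/
  H : C → C
  /-- `H F` is a finite direct sum of shifts `E[-n]`, with multiplicity
  `dim_ℂ Hom^n(E,F)` for each `n`. -/
  H_iso : ∀ F : C, ∃ (k : ℕ) (ns : Fin k → ℤ),
    Nonempty (H F ≅ biproduct (fun i => (shiftFunctor C (ns i)).obj E)) ∧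
    ∀ n : ℤ, (Finset.univ.filter fun i => ns i = -n).card
        = Module.finrank ℂ (E ⟶ (shiftFunctor C n).obj F)
  /-- the map `h^∨·id − id·h : Hom^{*-2}(E,F) ⊗ E → Hom^*(E,F) ⊗ E`. -/
  θ : ∀ F : C, (shiftFunctor C (-2 : ℤ)).obj (H F) ⟶ H F
  /-- the inner cone `T F = Cone(θ F)`. -/
  T : C → C
  ι : ∀ F : C, H F ⟶ T F
  π : ∀ F : C, T F ⟶ (shiftFunctor C (1 : ℤ)).obj ((shiftFunctor C (-2 : ℤ)).obj (H F))
  innerTri : ∀ F : C, Triangle.mk (θ F) (ι F) (π F) ∈ distTriang C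
  /-- the map `T F → F` induced by the evaluation `Hom^*(E,F) ⊗ E → F`. -/
  ev : ∀ F : C, T F ⟶ F
  η : ∀ F : C, F ⟶ P.functor.obj F
  dl : ∀ F : C, P.functor.obj F ⟶ (shiftFunctor C (1 : ℤ)).obj (T F)
  /-- `P F = Cone(T F → F)`. -/
  outerTri : ∀ F : C, Triangle.mk (ev F) (η F) (dl F) ∈ distTriang C

/-!
Write `X = P_ℰ(ℰ)`. The double cone makes `X` an iterated extension of `⨁ ℰ[nᵢ + 1]`, `⨁ ℰ[nᵢ]`
and `ℰ`, where `nᵢ` runs over `0, -2, …, -2d`. Since the twist is fully faithful, `X` is again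
a brick without negative self-extensions; descending induction on `m` then gives
`Hom(ℰ[m], X) = 0` for all `m > -2d`. If `ℰ ⟶ X` vanishes, the identity of `X` therefore factors
through the single summand `ℰ[-2d]`, and a nonzero retract of a brick is the whole brick. If
`ℰ ⟶ X` does not vanish, then `d = 0` and it is a split monomorphism into the brick `X`.
-/

section Pretriangulated

variable {D : Type*} [Category* D] [Preadditive D] [HasZeroObject D] [HasShift D ℤ]
  [∀ n : ℤ, (shiftFunctor D n).Additive] [Pretriangulated D] {T : Triangle D}

theorem subsingleton_hom_obj₂ (hT : T ∈ distTriang D) {A : D}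
    (h₁ : Subsingleton (A ⟶ T.obj₁)) (h₃ : Subsingleton (A ⟶ T.obj₃)) :
    Subsingleton (A ⟶ T.obj₂) := by
  refine subsingleton_of_forall_eq 0 fun f => ?_
  obtain ⟨g, rfl⟩ := T.coyoneda_exact₂ hT f (Subsingleton.elim _ _)
  rw [Subsingleton.elim g 0, zero_comp]

theorem subsingleton_obj₂_hom (hT : T ∈ distTriang D) {Z : D}
    (h₁ : Subsingleton (T.obj₁ ⟶ Z)) (h₃ : Subsingleton (T.obj₃ ⟶ Z)) :
    Subsingleton (T.obj₂ ⟶ Z) := by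
  refine subsingleton_of_forall_eq 0 fun f => ?_
  obtain ⟨g, rfl⟩ := T.yoneda_exact₂ hT f (Subsingleton.elim _ _)
  rw [Subsingleton.elim g 0, comp_zero]

theorem exists_distTriang_of_iso (hT : T ∈ distTriang D) {A B : D}
    (e₁ : T.obj₁ ≅ A) (e₃ : T.obj₃ ≅ B) :
    ∃ (f : A ⟶ T.obj₂) (g : T.obj₂ ⟶ B) (h : B ⟶ A⟦(1 : ℤ)⟧),
      Triangle.mk f g h ∈ distTriang D :=
  ⟨e₁.inv ≫ T.mor₁, T.mor₂ ≫ e₃.hom, e₃.inv ≫ T.mor₃ ≫ e₁.hom⟦1⟧',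
    isomorphic_distinguished _ hT _ (Triangle.isoMk _ _ e₁.symm (Iso.refl _) e₃.symm
      (by simp [Triangle.mk]) (by simp [Triangle.mk]) (by simp [Triangle.mk]))⟩

end Pretriangulated

section Shift

variable {D : Type*} [Category* D] [HasShift D ℤ] {X Y : D} {a b c : ℤ}

theorem subsingleton_shift_hom_shift_iff (h : c + a = b) :
    Subsingleton (X⟦a⟧ ⟶ Y⟦b⟧) ↔ Subsingleton (X ⟶ Y⟦c⟧) :=
  (((Iso.refl (X⟦a⟧)).homCongr ((shiftFunctorAdd' D c a b h).app Y)).trans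
    (Functor.FullyFaithful.ofFullyFaithful (shiftFunctor D a)).homEquiv.symm).subsingleton_congr

theorem subsingleton_shift_hom_shift_iff' (h : c + b = a) :
    Subsingleton (X⟦a⟧ ⟶ Y⟦b⟧) ↔ Subsingleton (X⟦c⟧ ⟶ Y) :=
  ((((shiftFunctorAdd' D c b a h).app X).homCongr (Iso.refl (Y⟦b⟧))).trans
    (Functor.FullyFaithful.ofFullyFaithful (shiftFunctor D b)).homEquiv.symm).subsingleton_congr

theorem subsingleton_shift_zero_hom_iff :
    Subsingleton (X⟦(0 : ℤ)⟧ ⟶ Y) ↔ Subsingleton (X ⟶ Y) :=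
  (((shiftFunctorZero D ℤ).app X).homCongr (Iso.refl Y)).subsingleton_congr

theorem subsingleton_hom_shift_zero_iff :
    Subsingleton (X ⟶ Y⟦(0 : ℤ)⟧) ↔ Subsingleton (X ⟶ Y) :=
  ((Iso.refl X).homCongr ((shiftFunctorZero D ℤ).app Y)).subsingleton_congr

theorem subsingleton_map_hom_shift_iff (F : D ⥤ D) [F.Full] [F.Faithful] [F.CommShift ℤ] :
    Subsingleton (F.obj X ⟶ (F.obj Y)⟦a⟧) ↔ Subsingleton (X ⟶ Y⟦a⟧) :=
  (((Iso.refl (F.obj X)).homCongr ((F.commShiftIso a).symm.app Y)).trans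
    (Functor.FullyFaithful.ofFullyFaithful F).homEquiv.symm).subsingleton_congr

end Shift

section Biproduct

variable {D : Type*} [Category* D] [Preadditive D] {ι : Type*} {B : ι → D} [HasBiproduct B]
  {X : D}

theorem subsingleton_biproduct_hom_iff :
    Subsingleton (⨁ B ⟶ X) ↔ ∀ i, Subsingleton (B i ⟶ X) := by
  refine ⟨fun _ i => ⟨fun f g => ?_⟩, fun _ => ⟨fun f g => biproduct.hom_ext' _ _ fun i =>
    Subsingleton.elim _ _⟩⟩
  rw [← cancel_epi (biproduct.π B i)]
  exact Subsingleton.elim _ _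

theorem subsingleton_hom_biproduct (h : ∀ i, Subsingleton (X ⟶ B i)) :
    Subsingleton (X ⟶ ⨁ B) :=
  ⟨fun _ _ => biproduct.hom_ext _ _ fun i => (h i).allEq _ _⟩

theorem nonempty_retract_summand {i₀ : ι} (h : ∀ i, i ≠ i₀ → Subsingleton (B i ⟶ X))
    (r : Retract X (⨁ B)) : Nonempty (Retract X (B i₀)) := by
  have hr : biproduct.π B i₀ ≫ biproduct.ι B i₀ ≫ r.r = r.r := by
    refine biproduct.hom_ext' _ _ fun i => ?_
    obtain rfl | hi := eq_or_ne i i₀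
    · simp
    · have := h i hi
      exact Subsingleton.elim _ _
  exact ⟨⟨r.i ≫ biproduct.π B i₀, biproduct.ι B i₀ ≫ r.r, by
    rw [Category.assoc, hr, r.retract]⟩⟩

end Biproduct

section Brick

/-- A *brick*: a nonzero object all of whose nonzero endomorphisms are invertible, i.e. whose
endomorphism ring is a division ring. -/
structure IsBrick {D : Type*} [Category* D] [HasZeroMorphisms D] (E : D) : Prop where
  not_isZero : ¬ IsZero E
  isIso_of_ne_zero : ∀ f : E ⟶ E, f ≠ 0 → IsIso f

variable {D : Type*} [Category* D]

namespace IsBrick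

theorem map [HasZeroMorphisms D] {E : D} (hE : IsBrick E)
    {D' : Type*} [Category* D'] [HasZeroMorphisms D'] (F : D ⥤ D') [F.Full] [F.Faithful]
    [F.PreservesZeroMorphisms] :
    IsBrick (F.obj E) where
  not_isZero := by
    rw [IsZero.iff_id_eq_zero, ← F.map_id, F.map_eq_zero_iff, ← IsZero.iff_id_eq_zero]
    exact hE.not_isZero
  isIso_of_ne_zero f hf := by
    obtain ⟨g, rfl⟩ := F.map_surjective f
    have := hE.isIso_of_ne_zero g (mt (F.map_eq_zero_iff).2 hf)
    infer_instance

theorem eq_zero_of_comp_eq_zero [HasZeroMorphisms D] {E Y : D} (hE : IsBrick E) {f : E ⟶ E}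
    {g : E ⟶ Y} (hfg : f ≫ g = 0) (hg : g ≠ 0) : f = 0 := by
  by_contra hf
  have := hE.isIso_of_ne_zero f hf
  exact hg ((cancel_epi f).1 (hfg.trans comp_zero.symm))

theorem nonempty_iso_of_retract [HasZeroMorphisms D] {A E : D} (hE : IsBrick E)
    (hA : ¬ IsZero A) (r : Retract A E) : Nonempty (A ≅ E) := by
  have hri : r.r ≫ r.i ≠ 0 := fun h => hA <| (IsZero.iff_id_eq_zero A).2 <| by
    calc 𝟙 A = r.i ≫ (r.r ≫ r.i) ≫ r.r := by simp
      _ = 0 := by rw [h, zero_comp, comp_zero]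
  have := hE.isIso_of_ne_zero _ hri
  have : IsSplitEpi r.i := ⟨⟨⟨inv (r.r ≫ r.i) ≫ r.r, by simp⟩⟩⟩
  have : IsIso r.i := isIso_of_mono_of_isSplitEpi r.i
  exact ⟨asIso r.i⟩

theorem of_finrank_end_eq_one {k : Type*} [Field k] [Preadditive D] [Linear k D] {E : D}
    (h : Module.finrank k (E ⟶ E) = 1) : IsBrick E := by
  have := Module.nontrivial_of_finrank_pos (h.symm ▸ Nat.one_pos)
  have hid : 𝟙 E ≠ 0 := fun h₀ =>
    not_subsingleton (E ⟶ E) ⟨((IsZero.iff_id_eq_zero E).2 h₀).eq_of_src⟩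
  refine ⟨mt (IsZero.iff_id_eq_zero E).1 hid, fun f hf => ?_⟩
  obtain ⟨c, rfl⟩ := (finrank_eq_one_iff_of_nonzero' _ hid).1 h f
  have hc : c ≠ 0 := fun h₀ => hf (by rw [h₀, zero_smul])
  exact ⟨c⁻¹ • 𝟙 E, by simp [smul_smul, hc], by simp [smul_smul, hc]⟩

end IsBrick

end Brick

section DoubleCone

variable {D : Type*} [Category* D] [Preadditive D] [HasZeroObject D] [HasShift D ℤ]
  [∀ n : ℤ, (shiftFunctor D n).Additive] [Pretriangulated D] {ι : Type*} [Finite ι]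

/-- A presentation of `X` as a double cone `Cone(Cone(H⟦-2⟧ ⟶ H) ⟶ E)` with `H = ⨁ E⟦n i⟧`.
Both triangles are rotated so that `X` is an iterated extension of `⨁ E⟦n i⟧`, `⨁ E⟦n i + 1⟧`
and `E`; the object `Y` is the shift by `1` of the inner cone. -/
structure DoubleCone (E : D) (n : ι → ℤ) (X : D) where
  Y : D
  η : E ⟶ X
  p : X ⟶ Y
  ε : Y ⟶ E⟦(1 : ℤ)⟧
  outer : Triangle.mk η p ε ∈ distTriang D
  l : (⨁ fun i => E⟦n i + 1⟧) ⟶ Y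
  q : Y ⟶ ⨁ fun i => E⟦n i⟧
  κ : (⨁ fun i => E⟦n i⟧) ⟶ (⨁ fun i => E⟦n i + 1⟧)⟦(1 : ℤ)⟧
  inner : Triangle.mk l q κ ∈ distTriang D

namespace DoubleCone

theorem nonempty_of_distTriang {E X H T : D} {n : ι → ℤ} (e : H ≅ ⨁ fun i => E⟦n i⟧)
    {θ : H⟦(-2 : ℤ)⟧ ⟶ H} {α : H ⟶ T} {β : T ⟶ H⟦(-2 : ℤ)⟧⟦(1 : ℤ)⟧}
    (inner : Triangle.mk θ α β ∈ distTriang D)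
    {ev : T ⟶ E} {η : E ⟶ X} {δ : X ⟶ T⟦(1 : ℤ)⟧}
    (outer : Triangle.mk ev η δ ∈ distTriang D) :
    Nonempty (DoubleCone E n X) := by
  have := preservesBiproductsOfShape_of_preservesCoproductsOfShape (J := ι) (shiftFunctor D (1 : ℤ))
  let eL : H⟦(1 : ℤ)⟧ ≅ ⨁ fun i => E⟦n i + 1⟧ :=
    (shiftFunctor D 1).mapIso e ≪≫ (shiftFunctor D 1).mapBiproduct _ ≪≫
      biproduct.mapIso fun i => ((shiftFunctorAdd D (n i) 1).app E).symm
  let eG : H⟦(-2 : ℤ)⟧⟦(1 : ℤ)⟧⟦(1 : ℤ)⟧ ≅ ⨁ fun i => E⟦n i⟧ :=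
    ((shiftFunctorAdd' D (1 : ℤ) 1 2 rfl).app _).symm ≪≫
      (shiftFunctorCompIsoId D (-2 : ℤ) 2 rfl).app H ≪≫ e
  obtain ⟨l, q, κ, h⟩ := exists_distTriang_of_iso
    (Triangle.shift_distinguished _ (rot_of_distTriang _ inner) 1) eL eG
  exact ⟨⟨_, η, δ, _, rot_of_distTriang _ outer, l, q, κ, h⟩⟩

variable {E X : D} {n : ι → ℤ} {i₀ : ι}

theorem subsingleton_shift_hom_of_two_le (c : DoubleCone E n X)
    (hE : ∀ m : ℤ, m < 0 → Subsingleton (E ⟶ E⟦m⟧)) (hn : ∀ i, n i ≤ 0) {m : ℤ} (hm : 2 ≤ m) :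
    Subsingleton (E⟦m⟧ ⟶ X) := by
  have hEE : ∀ b < m, Subsingleton (E⟦m⟧ ⟶ E⟦b⟧) := fun b hb =>
    (subsingleton_shift_hom_shift_iff (sub_add_cancel b m)).2 (hE _ (sub_neg.2 hb))
  have hY : Subsingleton (E⟦m⟧ ⟶ c.Y) := subsingleton_hom_obj₂ c.inner
    (subsingleton_hom_biproduct fun i => hEE _ (by have := hn i; omega))
    (subsingleton_hom_biproduct fun i => hEE _ (by have := hn i; omega))
  exact subsingleton_hom_obj₂ c.outer
    (subsingleton_hom_shift_zero_iff.1 (hEE 0 (by omega))) hY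

/-- The long exact sequences reduce `Hom(E⟦m⟧, X)` to `Hom(X, X⟦n i₀ - m⟧)`, a negative self-Ext,
because every other term is some `Hom(E⟦m'⟧, X)` with `m < m'`. -/
theorem subsingleton_shift_hom_of_forall_gt (c : DoubleCone E n X)
    (hX : ∀ m : ℤ, m < 0 → Subsingleton (X ⟶ X⟦m⟧)) (h₀ : n i₀ ≤ 0)
    (hmin : ∀ i, n i₀ ≤ n i) {m : ℤ} (hm : n i₀ < m) (ih : ∀ m' > m, Subsingleton (E⟦m'⟧ ⟶ X)) :
    Subsingleton (E⟦m⟧ ⟶ X) := by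
  obtain ⟨r, hr⟩ : ∃ r : ℤ, m + r = n i₀ := ⟨n i₀ - m, by ring⟩
  have hEX : ∀ s, n i₀ < s → Subsingleton (E⟦s⟧ ⟶ X⟦r⟧) := fun s hs =>
    (subsingleton_shift_hom_shift_iff' (sub_add_cancel s r)).2 (ih _ (by omega))
  have hL : Subsingleton ((⨁ fun i => E⟦n i + 1⟧)⟦(1 : ℤ)⟧ ⟶ X⟦r⟧) :=
    (subsingleton_shift_hom_shift_iff (sub_add_cancel r 1)).2 <|
      subsingleton_biproduct_hom_iff.2 fun i =>
        (subsingleton_shift_hom_shift_iff' (sub_add_cancel _ _)).2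
          (ih _ (by have := hmin i; omega))
  have hY : Subsingleton (c.Y ⟶ X⟦r⟧) := subsingleton_obj₂_hom (rot_of_distTriang _ c.outer)
    (hX r (by omega)) (hEX 1 (by omega))
  have hG : Subsingleton ((⨁ fun i => E⟦n i⟧) ⟶ X⟦r⟧) :=
    subsingleton_obj₂_hom (rot_of_distTriang _ c.inner) hY hL
  exact (subsingleton_shift_hom_shift_iff' hr).1 (subsingleton_biproduct_hom_iff.1 hG i₀)

theorem subsingleton_shift_hom (c : DoubleCone E n X)
    (hE : ∀ m : ℤ, m < 0 → Subsingleton (E ⟶ E⟦m⟧))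
    (hX : ∀ m : ℤ, m < 0 → Subsingleton (X ⟶ X⟦m⟧))
    (hn : ∀ i, n i ≤ 0) (hmin : ∀ i, n i₀ ≤ n i) (m : ℤ) (hm : n i₀ < m) :
    Subsingleton (E⟦m⟧ ⟶ X) := by
  induction hk : (2 - m).toNat using Nat.strong_induction_on generalizing m with
  | _ k ih =>
    obtain h2 | h2 := le_or_gt 2 m
    · exact c.subsingleton_shift_hom_of_two_le hE hn h2
    · exact c.subsingleton_shift_hom_of_forall_gt hX (hn i₀) hmin hm fun m' hm' =>
        ih _ (by omega) m' (by omega) rfl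

theorem nonempty_retract_of_η_eq_zero (c : DoubleCone E n X) (hη : c.η = 0)
    (hL : ∀ i, Subsingleton (E⟦n i + 1⟧ ⟶ X)) (hG : ∀ i, i ≠ i₀ → Subsingleton (E⟦n i⟧ ⟶ X)) :
    Nonempty (Retract X (E⟦n i₀⟧)) := by
  obtain ⟨w, hw⟩ : ∃ w : c.Y ⟶ X, 𝟙 X = c.p ≫ w :=
    Triangle.yoneda_exact₂ _ c.outer (𝟙 X) ((Category.comp_id c.η).trans hη)
  have hw₀ : c.l ≫ w = 0 := by
    have := subsingleton_biproduct_hom_iff.2 hL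
    exact Subsingleton.elim _ _
  obtain ⟨g, hg⟩ : ∃ g : (⨁ fun i => E⟦n i⟧) ⟶ X, w = c.q ≫ g :=
    Triangle.yoneda_exact₂ _ c.inner w hw₀
  exact nonempty_retract_summand (B := fun i => E⟦n i⟧) hG
    ⟨c.p ≫ c.q, g, by rw [Category.assoc, ← hg, ← hw]⟩

theorem ε_eq_zero (c : DoubleCone E n X) (hE : IsBrick E)
    (hE₁ : Subsingleton (E ⟶ E⟦(1 : ℤ)⟧)) (hη : c.η ≠ 0) (hn : ∀ i, n i = 0) : c.ε = 0 := by
  have hεη : c.ε ≫ c.η⟦1⟧' = 0 := comp_distTriang_mor_zero₃₁ _ c.outer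
  have hη₁ : c.η⟦(1 : ℤ)⟧' ≠ 0 := mt ((shiftFunctor D (1 : ℤ)).map_eq_zero_iff).1 hη
  have hbrick : ∀ a : ℤ, a = 1 → ∀ f : E⟦a⟧ ⟶ E⟦(1 : ℤ)⟧, f ≫ c.η⟦1⟧' = 0 → f = 0 := by
    rintro _ rfl f hf
    exact (hE.map (shiftFunctor D (1 : ℤ))).eq_zero_of_comp_eq_zero hf hη₁
  have hl : c.l ≫ c.ε = 0 := biproduct.hom_ext' _ _ fun i => by
    rw [comp_zero]
    exact hbrick _ (by simp [hn i]) _ (by simp only [Category.assoc, hεη, comp_zero])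
  obtain ⟨g, hg⟩ : ∃ g : (⨁ fun i => E⟦n i⟧) ⟶ E⟦(1 : ℤ)⟧, c.ε = c.q ≫ g :=
    Triangle.yoneda_exact₂ _ c.inner c.ε hl
  have : Subsingleton ((⨁ fun i => E⟦n i⟧) ⟶ E⟦(1 : ℤ)⟧) :=
    subsingleton_biproduct_hom_iff.2 fun i =>
      (subsingleton_shift_hom_shift_iff (by simp [hn i])).2 hE₁
  rw [hg, Subsingleton.elim g 0, comp_zero]

theorem nonempty_retract_of_ε_eq_zero (c : DoubleCone E n X) (hε : c.ε = 0) :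
    Nonempty (Retract E X) := by
  have : Mono c.η := Triangle.mono₁ _ c.outer hε
  have : IsSplitMono c.η := isSplitMono_of_mono c.η
  exact ⟨⟨c.η, retraction c.η, IsSplitMono.id c.η⟩⟩

theorem nonempty_iso (c : DoubleCone E n X) (hE : IsBrick E) (hX : IsBrick X)
    (hE' : ∀ m : ℤ, m < 0 → Subsingleton (E ⟶ E⟦m⟧)) (hE₁ : Subsingleton (E ⟶ E⟦(1 : ℤ)⟧))
    (hX' : ∀ m : ℤ, m < 0 → Subsingleton (X ⟶ X⟦m⟧)) (hn : ∀ i, n i ≤ 0)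
    (hmin : ∀ i, i ≠ i₀ → n i₀ < n i) :
    Nonempty (X ≅ E⟦n i₀⟧) := by
  have hle : ∀ i, n i₀ ≤ n i := fun i =>
    (eq_or_ne i i₀).elim (fun h => h ▸ le_rfl) fun h => (hmin i h).le
  have hEX := c.subsingleton_shift_hom hE' hX' hn hle
  by_cases hη : c.η = 0
  · obtain ⟨r⟩ := c.nonempty_retract_of_η_eq_zero hη
      (fun i => hEX _ (Int.lt_add_one_of_le (hle i))) (fun i hi => hEX _ (hmin i hi))
    exact (hE.map (shiftFunctor D (n i₀))).nonempty_iso_of_retract hX.not_isZero r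
  · have h₀ : n i₀ = 0 := by
      by_contra h
      have := subsingleton_shift_zero_hom_iff.1 (hEX 0 (lt_of_le_of_ne (hn i₀) h))
      exact hη (Subsingleton.elim _ _)
    obtain ⟨r⟩ := c.nonempty_retract_of_ε_eq_zero
      (c.ε_eq_zero hE hE₁ hη fun i => le_antisymm (hn i) (h₀.symm.trans_le (hle i)))
    obtain ⟨e⟩ := hX.nonempty_iso_of_retract hE.not_isZero r
    exact ⟨e.symm ≪≫ ((shiftFunctorZero' D (n i₀) h₀).app E).symm⟩

end DoubleCone

end DoubleCone

section General

variable {k : Type*} [Field k] {D : Type*} [Category* D] [Preadditive D] [Linear k D]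
  [HasShift D ℤ] {d : ℕ} {E : D}

/-- The graded vector space `Hom^*(E, E)` has the dimensions of `H^*(ℙ^d; k)`: the part of
the definition of a `ℙ^d`-object that records the additive structure of `Hom^*(E, E)`. -/
structure HasPdGradedDim (k : Type*) [Field k] {D : Type*} [Category* D] [Preadditive D]
    [Linear k D] [HasShift D ℤ] (d : ℕ) (E : D) : Prop where
  finrank_eq_one : ∀ j : ℕ, j ≤ d → Module.finrank k (E ⟶ E⟦2 * (j : ℤ)⟧) = 1
  subsingleton : ∀ m : ℤ, (¬ ∃ j : ℕ, j ≤ d ∧ m = 2 * (j : ℤ)) → Subsingleton (E ⟶ E⟦m⟧)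

namespace HasPdGradedDim

theorem isBrick (hE : HasPdGradedDim k d E) : IsBrick E := by
  refine .of_finrank_end_eq_one (k := k) ?_
  rw [← hE.finrank_eq_one 0 d.zero_le]
  exact (Linear.homCongr k (Iso.refl E)
    ((shiftFunctorZero' D (2 * ((0 : ℕ) : ℤ)) (by simp)).app E).symm).finrank_eq

theorem subsingleton_of_neg (hE : HasPdGradedDim k d E) {m : ℤ} (hm : m < 0) :
    Subsingleton (E ⟶ E⟦m⟧) :=
  hE.subsingleton m (by rintro ⟨j, -, rfl⟩; omega)

variable {ι : Type*} [Fintype ι] {n : ι → ℤ}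

theorem exists_eq_neg_two_mul (hE : HasPdGradedDim k d E)
    (hn : ∀ m : ℤ, (Finset.univ.filter fun i => n i = -m).card = Module.finrank k (E ⟶ E⟦m⟧))
    (i : ι) : ∃ j : ℕ, j ≤ d ∧ n i = -(2 * (j : ℤ)) := by
  by_contra! h
  have := hE.subsingleton (-n i) fun ⟨j, hj, hij⟩ => h j hj (by omega)
  have hcard := hn (-n i)
  rw [Module.finrank_zero_of_subsingleton, Finset.card_eq_zero] at hcard
  exact Finset.notMem_empty i (hcard ▸ by simp)

theorem exists_unique_min (hE : HasPdGradedDim k d E)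
    (hn : ∀ m : ℤ, (Finset.univ.filter fun i => n i = -m).card = Module.finrank k (E ⟶ E⟦m⟧)) :
    ∃ i₀, n i₀ = -(2 * (d : ℤ)) ∧ ∀ i, i ≠ i₀ → n i₀ < n i := by
  obtain ⟨i₀, h⟩ := Finset.card_eq_one.1 ((hn (2 * d)).trans (hE.finrank_eq_one d le_rfl))
  have hiff : ∀ i, n i = -(2 * (d : ℤ)) ↔ i = i₀ := by
    simpa [Finset.ext_iff] using h
  refine ⟨i₀, (hiff i₀).2 rfl, fun i hi => ?_⟩
  obtain ⟨j, hj, hij⟩ := hE.exists_eq_neg_two_mul hn i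
  have := mt (hiff i).1 hi
  have := (hiff i₀).2 rfl
  omega

end HasPdGradedDim

theorem PdTwist_obj_self_general [HasZeroObject D] [∀ n : ℤ, (shiftFunctor D n).Additive]
    [Pretriangulated D] (hE : HasPdGradedDim k d E)
    (Φ : D ⥤ D) [Φ.Full] [Φ.Faithful] [Φ.CommShift ℤ]
    {ι : Type*} [Fintype ι] {n : ι → ℤ} {H T : D} (e : H ≅ ⨁ fun i => E⟦n i⟧)
    (hn : ∀ m : ℤ, (Finset.univ.filter fun i => n i = -m).card = Module.finrank k (E ⟶ E⟦m⟧))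
    {θ : H⟦(-2 : ℤ)⟧ ⟶ H} {α : H ⟶ T} {β : T ⟶ H⟦(-2 : ℤ)⟧⟦(1 : ℤ)⟧}
    (inner : Triangle.mk θ α β ∈ distTriang D)
    {ev : T ⟶ E} {η : E ⟶ Φ.obj E} {δ : Φ.obj E ⟶ T⟦(1 : ℤ)⟧}
    (outer : Triangle.mk ev η δ ∈ distTriang D) :
    Nonempty (Φ.obj E ≅ E⟦-(2 * (d : ℤ))⟧) := by
  obtain ⟨c⟩ := DoubleCone.nonempty_of_distTriang e inner outer
  obtain ⟨i₀, hi₀, hmin⟩ := hE.exists_unique_min hn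
  have hn_nonpos : ∀ i, n i ≤ 0 := fun i => by
    obtain ⟨j, -, hj⟩ := hE.exists_eq_neg_two_mul hn i
    omega
  have hE₁ : Subsingleton (E ⟶ E⟦(1 : ℤ)⟧) := hE.subsingleton 1 (by rintro ⟨j, -, hj⟩; omega)
  rw [← hi₀]
  exact c.nonempty_iso hE.isBrick (hE.isBrick.map Φ) (fun _ => hE.subsingleton_of_neg) hE₁
    (fun _ hm => (subsingleton_map_hom_shift_iff Φ).2 (hE.subsingleton_of_neg hm)) hn_nonpos hmin

end General

/-- Huybrechts–Thomas. For a `ℙ^d`-object `ℰ` with `ℙ^d`-twist `P_ℰ`,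
`P_ℰ(ℰ) ≅ ℰ[-2d]`. -/
theorem PdTwist_obj_self (d : ℕ) (tw : PdTwist C d) :
    Nonempty (tw.P.functor.obj tw.E ≅ (shiftFunctor C (-(2 * (d : ℤ)))).obj tw.E) := by
  obtain ⟨_, n, ⟨e⟩, hn⟩ := tw.H_iso tw.E
  have hE : HasPdGradedDim ℂ d tw.E :=
    ⟨tw.hom_rank_one, fun m hm => subsingleton_of_forall_eq 0 (tw.hom_rank_zero m hm)⟩
  let _ := tw.commShift
  exact PdTwist_obj_self_general hE tw.P.functor e hn (tw.innerTri tw.E) (tw.outerTri tw.E)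
end

section
/- Let X be a smooth projective variety of dimension 2d over ℂ, let ℰ ∈ D^b(X) be a ℙ^d-object with ℙ^d-twist P_ℰ, let G be a split generator of D^b(X), and set A := Cone(Hom^{*-2}(ℰ,G) ⊗ ℰ → Hom^*(ℰ,G) ⊗ ℰ). Then for every n ≥ 1 and every t ∈ ℝ, δ_t(G, P_ℰ^n(G)) ≤ 1 + δ_t(G, A) · Σ_{k=0}^{n-1} e^{(-2dk+1)t}. -/
open CategoryTheory CategoryTheory.Limits CategoryTheory.Pretriangulated Filter

universe v u

variable (C : Type u) [Category.{v} C] [Preadditive C] [HasZeroObject C]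
  [HasShift C ℤ] [∀ n : ℤ, (shiftFunctor C n).Additive] [Pretriangulated C]
  [HasFiniteBiproducts C] [CategoryTheory.Linear ℂ C]
  [∀ X Y : C, Module.Finite ℂ (X ⟶ Y)]

/-!
Since `Hom^*(E, E) = ℂ[h]/(h^{d+1})` is a chain ring, row and column operations bring a morphism
between finite direct sums of shifts of `E` to monomial form, with entries determined up to
isomorphism by the degrees alone. Applied to `θ E`, this presents `T E` as a cone of a monomial
matrix. If the summand `E` of `H E` were the target of a nonzero entry, the cone of that entry would
be a retract of `T E` without maps to `E`, so that its shift would be `P(E)`; but the class of `h^d`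
in the lowest summand of `(H E)⟦-2⟧` is killed by `θ` and by the evaluation and yields a nonzero map
`E⟦-4d⟧ ⟶ P(E)`, which such a cone does not admit. As the matrix is square, `θ E` then vanishes on
some summand, a shift of `E` splits off `T E` and `P(E) ≅ E⟦-2d⟧`.

The autoequivalence `P` commutes with the shift, but is not assumed to be `ℂ`-linear or
triangulated. The image of a distinguished triangle is still exact under all `Hom(W, -)`, and by
Fitting's lemma in the finite-dimensional endomorphism algebras it becomes distinguished after
changing its connecting morphism. The same argument replaces the octahedral axiom. Comparing `P(θ)`
with `θ⟦-2d⟧` entrywise gives `P(T F) ≅ (T F)⟦-2d⟧`.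

So `P^{k+1}(G)` is an extension of `(T G)⟦-2dk+1⟧` by `P^k(G)`, and complexity is subadditive on
extensions.
-/

section Fitting

open Polynomial

variable {K A : Type*} [Field K] [Ring A] [Algebra K A]

theorem exists_pow_mul_aeval_eq_zero_and_isUnit_add {a : A} (ha : IsIntegral K a) :
    ∃ (q : K[X]) (n : ℕ), a ^ n * aeval a q = 0 ∧ IsUnit (a + aeval a q) := by
  obtain ⟨q, hq, hXq⟩ := exists_eq_pow_rootMultiplicity_mul_and_not_dvd (minpoly K a)
    (minpoly.ne_zero ha) 0
  rw [C_0, sub_zero] at hq hXq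
  set n := (minpoly K a).rootMultiplicity 0
  have hann : aeval a (X ^ n * q) = 0 := by rw [← hq, minpoly.aeval]
  have hX : IsCoprime X q := (irreducible_X.coprime_iff_not_dvd).2 hXq
  have hcop : IsCoprime (X + q) (X ^ n * q) := by
    refine (IsCoprime.pow_right ?_).mul_right ?_
    · simpa [add_comm] using hX.symm.add_mul_left_left 1
    · simpa using hX.add_mul_left_left 1
  obtain ⟨r, s, hrs⟩ := hcop
  have hinv : aeval a r * aeval a (X + q) = 1 := by
    simpa [hann] using congrArg (aeval a) hrs
  have hinv' : aeval a (X + q) * aeval a r = 1 := by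
    rwa [← map_mul, mul_comm, map_mul]
  exact ⟨q, n, by simpa using hann,
    isUnit_iff_exists.2 ⟨aeval a r, by simpa using hinv', by simpa using hinv⟩⟩

theorem exists_mem_isUnit_add_of_mul_sub_one_mem [Algebra.IsIntegral K A] (I : TwoSidedIdeal A)
    {a b : A} (hba : b * a - 1 ∈ I) : ∃ p ∈ I, IsUnit (a + p) := by
  obtain ⟨q, n, hq, hunit⟩ :=
    exists_pow_mul_aeval_eq_zero_and_isUnit_add (Algebra.IsIntegral.isIntegral (R := K) a)
  refine ⟨aeval a q, ?_, hunit⟩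
  let φ := I.ringCon.mk'
  have hφ {x : A} : x ∈ I ↔ φ x = 0 := by
    rw [← TwoSidedIdeal.mem_ker, TwoSidedIdeal.ker_ringCon_mk']
  rw [hφ, map_sub, map_mul, map_one, sub_eq_zero] at hba
  have hqφ : φ a ^ n * φ (aeval a q) = 0 := by rw [← map_pow, ← map_mul, hq, map_zero]
  rw [hφ, ← one_mul (φ _), ← pow_mul_pow_eq_one n hba, mul_assoc, hqφ, mul_zero]

end Fitting

section WeakKernel

variable {D : Type*} [Category D] [HasZeroMorphisms D] {X Y Z Y' Z' : D}

/-- `f` is a weak kernel of `g`, as a proposition: the lifts through `f` need not be unique. -/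
structure IsWeakKernel (f : X ⟶ Y) (g : Y ⟶ Z) : Prop where
  comp_eq_zero : f ≫ g = 0
  exists_lift {W : D} (x : W ⟶ Y) (hx : x ≫ g = 0) : ∃ y, x = y ≫ f

/-- `g` is a weak cokernel of `f`, as a proposition: the descents along `g` need not be unique. -/
structure IsWeakCokernel (f : X ⟶ Y) (g : Y ⟶ Z) : Prop where
  comp_eq_zero : f ≫ g = 0
  exists_desc {W : D} (x : Y ⟶ W) (hx : f ≫ x = 0) : ∃ y, x = g ≫ y

theorem IsWeakKernel.of_iso {f : X ⟶ Y} {g : Y ⟶ Z} (hfg : IsWeakKernel f g)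
    (eY : Y ≅ Y') (eZ : Z ≅ Z') {g' : Y' ⟶ Z'} (w : g ≫ eZ.hom = eY.hom ≫ g') :
    IsWeakKernel (f ≫ eY.hom) g' where
  comp_eq_zero := by rw [Category.assoc, ← w, ← Category.assoc, hfg.comp_eq_zero, zero_comp]
  exists_lift x hx := by
    have hxg : (x ≫ eY.inv) ≫ g = 0 := by
      rw [← cancel_mono eZ.hom, Category.assoc, Category.assoc, w, eY.inv_hom_id_assoc, hx,
        zero_comp]
    obtain ⟨y, hy⟩ := hfg.exists_lift _ hxg
    exact ⟨y, by rw [← Category.assoc, ← hy, Category.assoc, eY.inv_hom_id, Category.comp_id]⟩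

variable {D' : Type*} [Category D'] [HasZeroMorphisms D'] (F : D ⥤ D') [F.IsEquivalence]

theorem IsWeakKernel.map {f : X ⟶ Y} {g : Y ⟶ Z} (hfg : IsWeakKernel f g) :
    IsWeakKernel (F.map f) (F.map g) where
  comp_eq_zero := by rw [← F.map_comp, hfg.comp_eq_zero, F.map_zero]
  exists_lift {W} x hx := by
    obtain ⟨x', hx'⟩ := F.map_surjective ((F.objObjPreimageIso W).hom ≫ x)
    have hzero : x' ≫ g = 0 := F.map_injective (by simp [hx', hx])
    obtain ⟨y, rfl⟩ := hfg.exists_lift x' hzero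
    exact ⟨(F.objObjPreimageIso W).inv ≫ F.map y, by
      rw [Category.assoc, ← F.map_comp, hx', Iso.inv_hom_id_assoc]⟩

theorem IsWeakCokernel.map {f : X ⟶ Y} {g : Y ⟶ Z} (hfg : IsWeakCokernel f g) :
    IsWeakCokernel (F.map f) (F.map g) where
  comp_eq_zero := by rw [← F.map_comp, hfg.comp_eq_zero, F.map_zero]
  exists_desc {W} x hx := by
    obtain ⟨x', hx'⟩ := F.map_surjective (x ≫ (F.objObjPreimageIso W).inv)
    have hzero : f ≫ x' = 0 := F.map_injective (by simp [hx', reassoc_of% hx])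
    obtain ⟨y, rfl⟩ := hfg.exists_desc x' hzero
    exact ⟨F.map y ≫ (F.objObjPreimageIso W).hom, by
      rw [← Category.assoc, ← F.map_comp, hx', Category.assoc, Iso.inv_hom_id, Category.comp_id]⟩

end WeakKernel

section DescendingEndomorphisms

variable (K : Type*) {D : Type*} [Category D] [Preadditive D] {X Y : D}

/-- The algebra of endomorphisms of `X` that descend along `h : X ⟶ Y` to endomorphisms of `Y`. -/
def descendingEnd [CommRing K] [Linear K D] (h : X ⟶ Y) : Subalgebra K (End X) where
  carrier := {x | ∃ ε : Y ⟶ Y, x.asHom ≫ h = h ≫ ε}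
  mul_mem' := by
    rintro x y ⟨ε, hx⟩ ⟨κ, hy⟩
    exact ⟨κ ≫ ε, show (y.asHom ≫ x.asHom) ≫ h = _ by rw [Category.assoc, hx, reassoc_of% hy]⟩
  add_mem' := by
    rintro x y ⟨ε, hx⟩ ⟨κ, hy⟩
    exact ⟨ε + κ, show (x.asHom + y.asHom) ≫ h = _ by
      rw [Preadditive.add_comp, hx, hy, Preadditive.comp_add]⟩
  algebraMap_mem' c := ⟨c • 𝟙 Y, show (c • 𝟙 X) ≫ h = _ by simp⟩

/-- The ideal of those descending endomorphisms `x` for which `x ≫ h` factors through `h` on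
both sides. -/
def factoringIdeal [CommRing K] [Linear K D] (h : X ⟶ Y) : TwoSidedIdeal (descendingEnd K h) :=
  .mk' {x | ∃ τ : Y ⟶ X, x.1.asHom ≫ h = h ≫ τ ≫ h}
    ⟨0, show (0 : X ⟶ X) ≫ h = _ by simp⟩
    (by
      rintro x y ⟨σ, hx⟩ ⟨τ, hy⟩
      exact ⟨σ + τ, show (x.1.asHom + y.1.asHom) ≫ h = _ by
        rw [Preadditive.add_comp, hx, hy, Preadditive.add_comp, Preadditive.comp_add]⟩)
    (by
      rintro x ⟨τ, hx⟩
      exact ⟨-τ, show (-x.1.asHom) ≫ h = _ by simp [hx]⟩)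
    (by
      rintro ⟨x, ε, hx⟩ y ⟨τ, hy⟩
      exact ⟨τ ≫ x.asHom, show (y.1.asHom ≫ x.asHom) ≫ h = _ by
        rw [Category.assoc, hx, reassoc_of% hy, Category.assoc, hx]⟩)
    (by
      rintro x ⟨y, κ, hy⟩ ⟨τ, hx⟩
      exact ⟨κ ≫ τ, show (y.asHom ≫ x.1.asHom) ≫ h = _ by
        rw [Category.assoc, hx, reassoc_of% hy, Category.assoc]⟩)

variable [Field K] [Linear K D]

theorem exists_iso_hom_comp_eq_add [Module.Finite K (X ⟶ X)] {h : X ⟶ Y} {α β : X ⟶ X}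
    {ε κ : Y ⟶ Y} {s : Y ⟶ X} (hα : α ≫ h = h ≫ ε) (hβ : β ≫ h = h ≫ κ)
    (hαβ : α ≫ β ≫ h = h + h ≫ s ≫ h) :
    ∃ (e : X ≅ X) (τ : Y ⟶ X) (ε' : Y ⟶ Y),
      e.hom ≫ h = α ≫ h + h ≫ τ ≫ h ∧ e.inv ≫ h = h ≫ ε' := by
  have : Module.Finite K (End X) := inferInstanceAs (Module.Finite K (X ⟶ X))
  let a : descendingEnd K h := ⟨α, ε, hα⟩
  let b : descendingEnd K h := ⟨β, κ, hβ⟩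
  have hba : b * a - 1 ∈ factoringIdeal K h := by
    refine (TwoSidedIdeal.mem_mk' ..).2 ⟨s, show (α ≫ β - 𝟙 X) ≫ h = _ from ?_⟩
    rw [Preadditive.sub_comp, Category.assoc, hαβ, Category.id_comp, add_sub_cancel_left]
  obtain ⟨p, hp, hunit⟩ := exists_mem_isUnit_add_of_mul_sub_one_mem (K := K) _ hba
  obtain ⟨τ, hτ⟩ := (TwoSidedIdeal.mem_mk' ..).1 hp
  obtain ⟨c, hac, hca⟩ := isUnit_iff_exists.1 hunit
  obtain ⟨ε', hε'⟩ := c.2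
  refine ⟨⟨α + p.1.asHom, c.1, congrArg Subtype.val hca, congrArg Subtype.val hac⟩, τ, ε', ?_, hε'⟩
  rw [← hτ]
  exact Preadditive.add_comp _ _ _ _ _ _

end DescendingEndomorphisms

section HomExact

variable {D : Type*} [Category D] [Preadditive D] [HasShift D ℤ]

/-- A triangle `A ⟶ B ⟶ X ⟶ A⟦1⟧` exact under every `Hom(W, -)` and, at `B`, under every
`Hom(-, W)`. Unlike being distinguished, this is visibly preserved by any equivalence commuting
with `⟦1⟧`. -/
structure IsHomExact {A B X : D} (f : A ⟶ B) (g : B ⟶ X) (h : X ⟶ A⟦(1 : ℤ)⟧) : Prop where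
  isWeakKernel₂ : IsWeakKernel f g
  isWeakKernel₃ : IsWeakKernel g h
  isWeakKernel₁ : IsWeakKernel h (f⟦(1 : ℤ)⟧')
  isWeakCokernel : IsWeakCokernel f g

variable {A B X : D} {f : A ⟶ B} {g : B ⟶ X} {h : X ⟶ A⟦(1 : ℤ)⟧}

theorem IsHomExact.map {D' : Type*} [Category D'] [Preadditive D'] [HasShift D' ℤ]
    (hE : IsHomExact f g h) (F : D ⥤ D') [F.IsEquivalence]
    (c : shiftFunctor D (1 : ℤ) ⋙ F ≅ F ⋙ shiftFunctor D' (1 : ℤ)) :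
    IsHomExact (F.map f) (F.map g) (F.map h ≫ c.hom.app A) where
  isWeakKernel₂ := hE.isWeakKernel₂.map F
  isWeakKernel₃ := by
    simpa using (hE.isWeakKernel₃.map F).of_iso (Iso.refl _) (c.app A)
      (g' := F.map h ≫ c.hom.app A) (by simp)
  isWeakKernel₁ := (hE.isWeakKernel₁.map F).of_iso (c.app A) (c.app B) (c.hom.naturality f)
  isWeakCokernel := hE.isWeakCokernel.map F

theorem IsHomExact.isIso_of_comp_eq {X₀ : D} {g₀ : B ⟶ X₀} {h₀ : X₀ ⟶ A⟦(1 : ℤ)⟧}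
    (hE₀ : IsHomExact f g₀ h₀) (hE : IsHomExact f g h) {u : X₀ ⟶ X} (e : X₀ ≅ X₀)
    (hu : g₀ ≫ u = g) (hue : u ≫ h = e.hom ≫ h₀) (he : g₀ ≫ e.inv ≫ h₀ = 0) : IsIso u := by
  have : Mono u := Preadditive.mono_of_cancel_zero _ fun x hx => by
    obtain ⟨y, hy⟩ := hE₀.isWeakKernel₃.exists_lift (x ≫ e.hom)
      (by rw [Category.assoc, ← hue, reassoc_of% hx, zero_comp])
    obtain ⟨w, hw⟩ := hE₀.isWeakKernel₃.exists_lift (g₀ ≫ e.inv) (by rw [Category.assoc, he])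
    have hxw : x = (y ≫ w) ≫ g₀ := by
      rw [Category.assoc, ← hw, ← reassoc_of% hy, e.hom_inv_id, Category.comp_id]
    obtain ⟨a, ha⟩ := hE.isWeakKernel₂.exists_lift (y ≫ w)
      (by rw [← hu, ← Category.assoc, ← hxw, hx])
    rw [hxw, ha, Category.assoc, hE₀.isWeakKernel₂.comp_eq_zero, comp_zero]
  have : IsSplitEpi u := by
    obtain ⟨w, hw⟩ := hE₀.isWeakKernel₁.exists_lift h hE.isWeakKernel₁.comp_eq_zero
    obtain ⟨b, hb⟩ := hE.isWeakKernel₃.exists_lift (𝟙 X - w ≫ e.inv ≫ u) (by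
      rw [Preadditive.sub_comp, Category.assoc, Category.assoc, hue, e.inv_hom_id_assoc, ← hw,
        Category.id_comp, sub_self])
    refine IsSplitEpi.mk' ⟨w ≫ e.inv + b ≫ g₀, ?_⟩
    rw [Preadditive.add_comp, Category.assoc, Category.assoc, hu, ← hb, add_sub_cancel]
  exact isIso_of_mono_of_isSplitEpi u

end HomExact

section Pretriangulated

variable {D : Type*} [Category D] [Preadditive D] [HasZeroObject D] [HasShift D ℤ]
  [∀ n : ℤ, (shiftFunctor D n).Additive] [Pretriangulated D]
  {A B X : D} {f : A ⟶ B} {g : B ⟶ X} {h : X ⟶ A⟦(1 : ℤ)⟧}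

theorem distinguished_of_iso {A' B' X' : D} {f' : A' ⟶ B'} {g' : B' ⟶ X'} {h' : X' ⟶ A'⟦(1 : ℤ)⟧}
    (hT : Triangle.mk f g h ∈ distTriang D) (eA : A ≅ A') (eB : B ≅ B') (eX : X ≅ X')
    (w₁ : f ≫ eB.hom = eA.hom ≫ f') (w₂ : g ≫ eX.hom = eB.hom ≫ g')
    (w₃ : h ≫ eA.hom⟦(1 : ℤ)⟧' = eX.hom ≫ h') : Triangle.mk f' g' h' ∈ distTriang D :=
  isomorphic_distinguished _ hT _ (Triangle.isoMk (Triangle.mk f g h) (Triangle.mk f' g' h')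
    eA eB eX w₁ w₂ w₃).symm

theorem IsHomExact.of_distinguished (hT : Triangle.mk f g h ∈ distTriang D) :
    IsHomExact f g h where
  isWeakKernel₂ := ⟨comp_distTriang_mor_zero₁₂ _ hT, Triangle.coyoneda_exact₂ _ hT⟩
  isWeakKernel₃ := ⟨comp_distTriang_mor_zero₂₃ _ hT, Triangle.coyoneda_exact₃ _ hT⟩
  isWeakKernel₁ := ⟨comp_distTriang_mor_zero₃₁ _ hT, Triangle.coyoneda_exact₁ _ hT⟩
  isWeakCokernel := ⟨comp_distTriang_mor_zero₁₂ _ hT, Triangle.yoneda_exact₂ _ hT⟩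

theorem IsHomExact.exists_isIso (K : Type*) [Field K] [Linear K D]
    [∀ X Y : D, Module.Finite K (X ⟶ Y)] {X₀ : D} {g₀ : B ⟶ X₀} {h₀ : X₀ ⟶ A⟦(1 : ℤ)⟧}
    (hT : Triangle.mk f g₀ h₀ ∈ distTriang D) (hE : IsHomExact f g h) :
    ∃ u : X₀ ⟶ X, IsIso u ∧ g₀ ≫ u = g := by
  have hE₀ := IsHomExact.of_distinguished hT
  have hdesc {W : D} (x : X₀ ⟶ W) (hx : g₀ ≫ x = 0) : ∃ y, x = h₀ ≫ y :=
    Triangle.yoneda_exact₃ _ hT x hx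
  have hg₀ := hE₀.isWeakKernel₃.comp_eq_zero
  have hg := hE.isWeakKernel₃.comp_eq_zero
  obtain ⟨u, hu⟩ := hE₀.isWeakCokernel.exists_desc g hE.isWeakKernel₂.comp_eq_zero
  obtain ⟨v, hv⟩ := hE.isWeakCokernel.exists_desc g₀ hE₀.isWeakKernel₂.comp_eq_zero
  obtain ⟨l, hl⟩ := hE.isWeakKernel₁.exists_lift h₀ hE₀.isWeakKernel₁.comp_eq_zero
  obtain ⟨l', hl'⟩ := hE₀.isWeakKernel₁.exists_lift h hE.isWeakKernel₁.comp_eq_zero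
  obtain ⟨s, hs⟩ := hdesc (u ≫ v - 𝟙 _) (by
    rw [Preadditive.comp_sub, ← reassoc_of% hu, ← hv, Category.comp_id, sub_self])
  obtain ⟨m, hm⟩ := hE.isWeakKernel₃.exists_lift (l' ≫ l - 𝟙 _) (by
    rw [Preadditive.sub_comp, Category.assoc, ← hl, ← hl', Category.id_comp, sub_self])
  obtain ⟨ε, hε⟩ := hdesc (u ≫ h) (by rw [← reassoc_of% hu, hg])
  obtain ⟨b, hb⟩ := hE.isWeakKernel₃.exists_lift (g₀ ≫ l) (by rw [Category.assoc, ← hl, hg₀])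
  have hgv : g ≫ v ≫ h₀ = 0 := by rw [← reassoc_of% hv, hg₀]
  obtain ⟨κ, hκ⟩ := hdesc (l ≫ v ≫ h₀) (by rw [reassoc_of% hb, hgv, comp_zero])
  have hα : (u ≫ l') ≫ h₀ = h₀ ≫ ε := by rw [Category.assoc, ← hl', hε]
  have hβ : (l ≫ v) ≫ h₀ = h₀ ≫ κ := by rw [Category.assoc, hκ]
  have hαβ : (u ≫ l') ≫ (l ≫ v) ≫ h₀ = h₀ + h₀ ≫ s ≫ h₀ := calc
    _ = u ≫ (l' ≫ l) ≫ v ≫ h₀ := by simp only [Category.assoc]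
    _ = (u ≫ v) ≫ h₀ := by
      simp [sub_eq_iff_eq_add.1 hm, hgv]
    _ = h₀ + h₀ ≫ s ≫ h₀ := by simp [sub_eq_iff_eq_add.1 hs, add_comm]
  -- `u` need not be invertible, but it may be corrected by any morphism that factors through `h₀`.
  obtain ⟨e, τ, ε', he, he'⟩ := exists_iso_hom_comp_eq_add (K := K) hα hβ hαβ
  refine ⟨u + h₀ ≫ τ ≫ l, hE₀.isIso_of_comp_eq hE e ?_ ?_ ?_, ?_⟩
  · rw [Preadditive.comp_add, ← hu, reassoc_of% hg₀, zero_comp, add_zero]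
  · simp only [he, Preadditive.add_comp, Category.assoc, ← hl, ← hl']
  · rw [he', reassoc_of% hg₀, zero_comp]
  · rw [Preadditive.comp_add, ← hu, reassoc_of% hg₀, zero_comp, add_zero]

theorem IsHomExact.exists_distinguished (K : Type*) [Field K] [Linear K D]
    [∀ X Y : D, Module.Finite K (X ⟶ Y)] (hE : IsHomExact f g h) :
    ∃ h', Triangle.mk f g h' ∈ distTriang D := by
  obtain ⟨X₀, g₀, h₀, hT⟩ := distinguished_cocone_triangle f
  obtain ⟨u, _, hu⟩ := hE.exists_isIso K hT
  exact ⟨inv u ≫ h₀, distinguished_of_iso hT (Iso.refl A) (Iso.refl B) (asIso u)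
    (by simp) (by simp [hu]) (by simp)⟩

theorem exists_distinguished_map (K : Type*) {D' : Type*} [Field K] [Category D'] [Preadditive D']
    [HasShift D' ℤ] [HasZeroObject D'] [∀ n : ℤ, (shiftFunctor D' n).Additive] [Pretriangulated D']
    [Linear K D'] [∀ X Y : D', Module.Finite K (X ⟶ Y)] (F : D ⥤ D') [F.IsEquivalence]
    (c : shiftFunctor D (1 : ℤ) ⋙ F ≅ F ⋙ shiftFunctor D' (1 : ℤ))
    (hT : Triangle.mk f g h ∈ distTriang D) :
    ∃ h', Triangle.mk (F.map f) (F.map g) h' ∈ distTriang D' :=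
  ((IsHomExact.of_distinguished hT).map F c).exists_distinguished K

end Pretriangulated

section HomotopyCartesian

variable {D : Type*} [Category D] [Preadditive D] [HasBinaryBiproducts D]
  {Y' Y Z' Z V : D} {a : Y' ⟶ Y} {b : Y' ⟶ Z'} {φ : Y ⟶ Z} {i : Z' ⟶ Z} {j : Z ⟶ V}

theorem IsWeakKernel.of_square (hsq : IsWeakKernel (biprod.lift a b) (biprod.desc φ i))
    (hij : IsWeakKernel i j) : IsWeakKernel a (φ ≫ j) where
  comp_eq_zero := by
    have hsum : a ≫ φ + b ≫ i = 0 := by simpa using hsq.comp_eq_zero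
    rw [← Category.assoc, eq_neg_of_add_eq_zero_left hsum, Preadditive.neg_comp, Category.assoc,
      hij.comp_eq_zero, comp_zero, neg_zero]
  exists_lift y hy := by
    obtain ⟨z, hz⟩ := hij.exists_lift (y ≫ φ) (by rwa [Category.assoc])
    obtain ⟨w, hw⟩ := hsq.exists_lift (biprod.lift y (-z)) (by simp [hz])
    exact ⟨w, by simpa using hw =≫ biprod.fst⟩

theorem IsWeakCokernel.of_square (hsq : IsWeakCokernel (biprod.lift a b) (biprod.desc φ i))
    (hij : IsWeakCokernel i j) : IsWeakCokernel a (φ ≫ j) where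
  comp_eq_zero := by
    have hsum : a ≫ φ + b ≫ i = 0 := by simpa using hsq.comp_eq_zero
    rw [← Category.assoc, eq_neg_of_add_eq_zero_left hsum, Preadditive.neg_comp, Category.assoc,
      hij.comp_eq_zero, comp_zero, neg_zero]
  exists_desc x hx := by
    obtain ⟨w, hw⟩ := hsq.exists_desc (biprod.desc x 0) (by simp [hx])
    obtain ⟨w', rfl⟩ := hij.exists_desc w (by simpa using (biprod.inr ≫= hw).symm)
    exact ⟨w', by simpa using biprod.inl ≫= hw⟩

end HomotopyCartesian

section Octahedron

variable {D : Type*} [Category D] [Preadditive D] [HasZeroObject D] [HasShift D ℤ]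
  [∀ n : ℤ, (shiftFunctor D n).Additive] [Pretriangulated D]
  {Y' Y Z' Z V : D} {a : Y' ⟶ Y} {b : Y' ⟶ Z'} {φ : Y ⟶ Z} {i : Z' ⟶ Z}
  {c : Z ⟶ Y'⟦(1 : ℤ)⟧} {j : Z ⟶ V} {k : V ⟶ Z'⟦(1 : ℤ)⟧}

theorem exists_connecting_of_square
    (hsq : Triangle.mk (biprod.lift a b) (biprod.desc φ i) c ∈ distTriang D)
    (hT : Triangle.mk i j k ∈ distTriang D) :
    ∃ m : V ⟶ Y'⟦(1 : ℤ)⟧, j ≫ m = c ∧ m ≫ a⟦(1 : ℤ)⟧' = 0 ∧ m ≫ b⟦(1 : ℤ)⟧' = -k := by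
  obtain ⟨m, hjm, hm⟩ : ∃ m : V ⟶ Y'⟦(1 : ℤ)⟧, j ≫ m = 𝟙 Z ≫ c ∧
      k ≫ (biprod.inr : Z' ⟶ Y ⊞ Z')⟦(1 : ℤ)⟧' = m ≫ (-(biprod.lift a b)⟦(1 : ℤ)⟧') :=
    complete_distinguished_triangle_morphism _ _ hT (rot_of_distTriang _ hsq) biprod.inr (𝟙 Z)
      ((Category.comp_id i).trans (biprod.inr_desc φ i).symm)
  have hcomp {W : D} (p : Y ⊞ Z' ⟶ W) :
      m ≫ (biprod.lift a b ≫ p)⟦(1 : ℤ)⟧' = -k ≫ (biprod.inr ≫ p)⟦(1 : ℤ)⟧' := by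
    rw [Functor.map_comp, Functor.map_comp, reassoc_of% hm, Preadditive.neg_comp,
      Preadditive.comp_neg, neg_neg]
  exact ⟨m, by simpa using hjm, by simpa using hcomp biprod.fst, by simpa using hcomp biprod.snd⟩

theorem IsHomExact.of_square
    (hsq : Triangle.mk (biprod.lift a b) (biprod.desc φ i) c ∈ distTriang D)
    (hT : Triangle.mk i j k ∈ distTriang D) : ∃ m, IsHomExact a (φ ≫ j) m := by
  obtain ⟨m, hjm, hma, hmb⟩ := exists_connecting_of_square hsq hT
  have hEsq := of_distinguished hsq
  have hE := of_distinguished hT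
  have hzero : biprod.desc φ i ≫ c = 0 := hEsq.isWeakKernel₃.comp_eq_zero
  refine ⟨m, hEsq.isWeakKernel₂.of_square hE.isWeakKernel₂, ⟨?_, fun x hx => ?_⟩,
    ⟨hma, fun y hy => ?_⟩, hEsq.isWeakCokernel.of_square hE.isWeakCokernel⟩
  · rw [Category.assoc, hjm]
    simpa using biprod.inl ≫= hzero
  · obtain ⟨z, rfl⟩ := hE.isWeakKernel₃.exists_lift x (by
      rw [← neg_eq_zero, ← Preadditive.comp_neg, ← hmb, reassoc_of% hx, zero_comp])
    obtain ⟨w, rfl⟩ := hEsq.isWeakKernel₃.exists_lift z (by rw [← hjm, ← Category.assoc, hx])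
    exact ⟨w ≫ biprod.fst, by
      simp [biprod.desc_eq, hE.isWeakKernel₂.comp_eq_zero]⟩
  · have hyb : (y ≫ b⟦(1 : ℤ)⟧') ≫ i⟦(1 : ℤ)⟧' = 0 := by
      have hsum : a ≫ φ + b ≫ i = 0 := by simpa using hEsq.isWeakKernel₂.comp_eq_zero
      rw [Category.assoc, ← Functor.map_comp, eq_neg_of_add_eq_zero_right hsum, Functor.map_neg,
        Functor.map_comp, Preadditive.comp_neg, reassoc_of% hy, zero_comp, neg_zero]
    obtain ⟨x, hx⟩ := hE.isWeakKernel₁.exists_lift _ hyb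
    have hlift : (y + x ≫ m) ≫ (biprod.lift a b)⟦(1 : ℤ)⟧' = 0 := by
      rw [biprod.lift_eq, Functor.map_add, Functor.map_comp, Functor.map_comp]
      simp [reassoc_of% hy, reassoc_of% hma, reassoc_of% hx, reassoc_of% hmb]
    obtain ⟨z, hz⟩ := hEsq.isWeakKernel₁.exists_lift _ hlift
    exact ⟨z ≫ j - x, by
      rw [Preadditive.sub_comp, Category.assoc, hjm, ← hz, add_sub_cancel_right]⟩

end Octahedron

section IsExtension

variable {D : Type*} [Category D] [Preadditive D] [HasZeroObject D] [HasShift D ℤ]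
  [∀ n : ℤ, (shiftFunctor D n).Additive] [Pretriangulated D] {X Y Z X' Y' Z' V : D}

/-- `Y` is an extension of `Z` by `X`: there is a distinguished triangle `X ⟶ Y ⟶ Z ⟶ X⟦1⟧`. -/
def IsExtension (X Y Z : D) : Prop :=
  ∃ (f : X ⟶ Y) (g : Y ⟶ Z) (h : Z ⟶ X⟦(1 : ℤ)⟧), Triangle.mk f g h ∈ distTriang D

namespace IsExtension

theorem of_iso (hE : IsExtension X Y Z) (eX : X ≅ X') (eY : Y ≅ Y') (eZ : Z ≅ Z') :
    IsExtension X' Y' Z' := by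
  obtain ⟨f, g, h, hT⟩ := hE
  exact ⟨eX.inv ≫ f ≫ eY.hom, eY.inv ≫ g ≫ eZ.hom, eZ.inv ≫ h ≫ eX.hom⟦(1 : ℤ)⟧',
    distinguished_of_iso hT eX eY eZ (by simp) (by simp) (by simp)⟩

theorem rotate_iff : IsExtension Y Z (X⟦(1 : ℤ)⟧) ↔ IsExtension X Y Z := by
  constructor
  · rintro ⟨g, h, k, hT⟩
    obtain ⟨f, hf⟩ := (shiftFunctor D (1 : ℤ)).map_surjective (-k)
    refine ⟨f, g, h, (rotate_distinguished_triangle _).2 ?_⟩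
    change Triangle.mk g h (-f⟦(1 : ℤ)⟧') ∈ distTriang D
    rwa [hf, neg_neg]
  · rintro ⟨f, g, h, hT⟩
    exact ⟨g, h, _, rot_of_distTriang _ hT⟩

theorem map_shift (hE : IsExtension X Y Z) (n : ℤ) : IsExtension (X⟦n⟧) (Y⟦n⟧) (Z⟦n⟧) := by
  obtain ⟨f, g, h, hT⟩ := hE
  exact ⟨_, _, _, Triangle.shift_distinguished _ hT n⟩

theorem map (K : Type*) {D' : Type*} [Field K] [Category D'] [Preadditive D'] [HasShift D' ℤ]
    [HasZeroObject D'] [∀ n : ℤ, (shiftFunctor D' n).Additive] [Pretriangulated D'] [Linear K D']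
    [∀ X Y : D', Module.Finite K (X ⟶ Y)] (F : D ⥤ D') [F.IsEquivalence]
    (c : shiftFunctor D (1 : ℤ) ⋙ F ≅ F ⋙ shiftFunctor D' (1 : ℤ)) (hE : IsExtension X Y Z) :
    IsExtension (F.obj X) (F.obj Y) (F.obj Z) := by
  obtain ⟨f, g, h, hT⟩ := hE
  exact ⟨_, _, exists_distinguished_map K F c hT⟩

theorem biprod_self (X Z : D) : IsExtension X (X ⊞ Z) Z :=
  ⟨_, _, _, binaryBiproductTriangle_distinguished X Z⟩

theorem biprod (hE : IsExtension X Y Z) (hE' : IsExtension X' Y' Z') :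
    IsExtension (X ⊞ X') (Y ⊞ Y') (Z ⊞ Z') := by
  obtain ⟨f, g, h, hT⟩ := hE
  obtain ⟨f', g', h', hT'⟩ := hE'
  let T : WalkingPair → Triangle D
    | .left => Triangle.mk f g h
    | .right => Triangle.mk f' g' h'
  have hprod := productTriangle_distinguished T (by rintro (_ | _) <;> assumption)
  let e (W : WalkingPair → D) : ∏ᶜ W ≅ W .left ⊞ W .right :=
    HasLimit.isoOfNatIso (diagramIsoPair _) ≪≫ (biprod.isoProd _ _).symm
  exact of_iso ⟨_, _, _, hprod⟩ (e _) (e _) (e _)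

theorem exists_pullback (K : Type*) [Field K] [Linear K D] [∀ X Y : D, Module.Finite K (X ⟶ Y)]
    (hE : IsExtension X Y Z) (hZ : IsExtension Z' Z V) :
    ∃ Y', IsExtension X Y' Z' ∧ IsExtension Y' Y V := by
  obtain ⟨f, g, h, hT⟩ := hE
  obtain ⟨i, j, k, hT'⟩ := hZ
  obtain ⟨Y', q, c, hq⟩ := distinguished_cocone_triangle₁ (biprod.desc g i)
  obtain ⟨a, b, rfl⟩ : ∃ a b, q = biprod.lift a b :=
    ⟨q ≫ biprod.fst, q ≫ biprod.snd, by ext <;> simp⟩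
  have hq' : Triangle.mk (biprod.lift b a) (biprod.desc i g) c ∈ distTriang D :=
    distinguished_of_iso hq (Iso.refl Y') (biprod.braiding Y Z') (Iso.refl Z)
      (by ext <;> simp) (by ext <;> simp) (by simp)
  obtain ⟨_, hV⟩ := IsHomExact.of_square hq hT'
  obtain ⟨_, hX⟩ := IsHomExact.of_square hq' (rot_of_distTriang _ hT)
  exact ⟨Y', rotate_iff.1 ⟨_, _, hX.exists_distinguished K⟩, _, _, hV.exists_distinguished K⟩

end IsExtension

end IsExtension

section BuildVal

variable {D : Type*} [Category D] [Preadditive D] [HasZeroObject D] [HasShift D ℤ]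
  [∀ n : ℤ, (shiftFunctor D n).Additive] [Pretriangulated D] {G X Y Z : D} {t r r' : ℝ}

namespace BuildVal

theorem snoc (hX : BuildVal D G t X r) {n : ℤ} (hE : IsExtension X Y (G⟦n⟧)) :
    BuildVal D G t Y (r + Real.exp (n * t)) := by
  obtain ⟨f, g, h, hT⟩ := hE
  exact .step X Y n r f g h hT hX

theorem of_iso (hX : BuildVal D G t X r) (e : X ≅ Y) : BuildVal D G t Y r := by
  cases hX with
  | zero _ hX => exact .zero _ (hX.of_iso e.symm)
  | step A _ n r f g h hT hA =>
    exact hA.snoc (IsExtension.of_iso ⟨f, g, h, hT⟩ (Iso.refl _) e (Iso.refl _))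

theorem nonneg (hX : BuildVal D G t X r) : 0 ≤ r := by
  induction hX with
  | zero => exact le_rfl
  | step _ _ _ _ _ _ _ _ _ ih => positivity

theorem exists_at (hX : BuildVal D G t X r) (s : ℝ) : ∃ r', BuildVal D G s X r' := by
  induction hX with
  | zero Z hZ => exact ⟨0, .zero Z hZ⟩
  | step A B n _ f g h hT _ ih =>
    obtain ⟨r', hr'⟩ := ih
    exact ⟨_, hr'.snoc ⟨f, g, h, hT⟩⟩

theorem map_shift (hX : BuildVal D G t X r) (m : ℤ) :
    BuildVal D G t (X⟦m⟧) (r * Real.exp (m * t)) := by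
  induction hX with
  | zero Z hZ => simpa using BuildVal.zero _ ((shiftFunctor D m).map_isZero hZ)
  | step A B n r f g h hT _ ih =>
    have hE : IsExtension A B (G⟦n⟧) := ⟨f, g, h, hT⟩
    have hshift := ih.snoc ((hE.map_shift m).of_iso (Iso.refl _) (Iso.refl _)
      ((shiftFunctorAdd D n m).app G).symm)
    rwa [add_mul, ← Real.exp_add, ← add_mul, ← Int.cast_add]

theorem extension (K : Type*) [Field K] [Linear K D] [∀ X Y : D, Module.Finite K (X ⟶ Y)]
    (hX : BuildVal D G t X r) (hZ : BuildVal D G t Z r') (hE : IsExtension X Y Z) :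
    BuildVal D G t Y (r + r') := by
  induction hZ generalizing Y with
  | zero Z hZ =>
    obtain ⟨f, _, _, hT⟩ := hE
    have : IsIso f := (Triangle.isZero₃_iff_isIso₁ _ hT).1 hZ
    simpa using hX.of_iso (asIso f)
  | step Z' Z n r' i j k hT _ ih =>
    obtain ⟨Y', hY', hY⟩ := hE.exists_pullback K ⟨i, j, k, hT⟩
    rw [← add_assoc]
    exact (ih hY').snoc hY

end BuildVal

theorem complexitySet_nonneg (hr : r ∈ complexitySet D G X t) : 0 ≤ r := by
  obtain ⟨_, _, hB, _⟩ := hr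
  exact hB.nonneg

theorem complexitySet_bddBelow : BddBelow (complexitySet D G X t) :=
  ⟨0, fun _ => complexitySet_nonneg⟩

theorem InSplitClosure.complexitySet_nonempty (hX : InSplitClosure D G X) (t : ℝ) :
    (complexitySet D G X t).Nonempty := by
  obtain ⟨_, B, X', hB, e⟩ := hX
  obtain ⟨r, hr⟩ := hB.exists_at t
  exact ⟨r, B, X', hr, e⟩

theorem complexity_le_add_mul (hX : InSplitClosure D G X) {c s : ℝ} (hs : 0 ≤ s)
    (h : ∀ r ∈ complexitySet D G X t, c + r * s ∈ complexitySet D G Y t) :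
    complexity D G Y t ≤ c + complexity D G X t * s := by
  rw [← sub_le_iff_le_add', mul_comm, ← smul_eq_mul, complexity, complexity,
    ← Real.sInf_smul_of_nonneg hs]
  refine le_csInf (hX.complexitySet_nonempty t).smul_set ?_
  rintro _ ⟨r, hr, rfl⟩
  have hle := csInf_le complexitySet_bddBelow (h r hr)
  rwa [← sub_le_iff_le_add', mul_comm] at hle

open ZeroObject in
theorem one_mem_complexitySet_self : 1 ∈ complexitySet D G G t := by
  have hE : IsExtension (0 : D) (G⟦(0 : ℤ)⟧) (G⟦(0 : ℤ)⟧) :=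
    ⟨_, _, _, contractible_distinguished₁ _⟩
  have hzero : IsZero (0 : D) := isZero_zero D
  refine ⟨G⟦(0 : ℤ)⟧, 0, by simpa using (BuildVal.zero (t := t) _ hzero).snoc hE, ⟨?_⟩⟩
  exact (shiftFunctorZero D ℤ).app G ≪≫ (isoBiprodZero hzero)

theorem complexitySet_map_shift (hr : r ∈ complexitySet D G X t) (m : ℤ) :
    r * Real.exp (m * t) ∈ complexitySet D G (X⟦m⟧) t := by
  obtain ⟨B, X', hB, ⟨e⟩⟩ := hr
  have := preservesBinaryBiproducts_of_preservesBiproducts (shiftFunctor D m)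
  exact ⟨_, X'⟦m⟧, hB.map_shift m,
    ⟨(shiftFunctor D m).mapIso e ≪≫ (shiftFunctor D m).mapBiprod X X'⟩⟩

theorem add_mem_complexitySet (K : Type*) [Field K] [Linear K D]
    [∀ X Y : D, Module.Finite K (X ⟶ Y)] (hX : r ∈ complexitySet D G X t)
    (hZ : r' ∈ complexitySet D G Z t) (hE : IsExtension X Y Z) :
    r + r' ∈ complexitySet D G Y t := by
  obtain ⟨B, X', hB, ⟨e⟩⟩ := hX
  obtain ⟨B', Z', hB', ⟨e'⟩⟩ := hZ
  exact ⟨_, _, (hB.of_iso e).extension K (hB'.of_iso e')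
    (hE.biprod (IsExtension.biprod_self X' Z')), ⟨Iso.refl _⟩⟩

end BuildVal

section PdObject

variable {D : Type*} [Category D] [Preadditive D] [HasShift D ℤ] [Linear ℂ D] {d : ℕ}
  (O : PdObject D d) {X X' Y Y' : D} {a a' b b' : ℤ}

namespace PdObject

theorem hpow_eq_comp {m n k : ℕ} (hk : k = m + n) :
    O.hpow k = ShiftedHom.comp (O.hpow m) (O.hpow n) (by rw [hk]; push_cast; ring) := by
  induction m generalizing k with
  | zero =>
    obtain rfl : k = n := by omega
    have hzero : O.hpow 0 = ShiftedHom.mk₀ (2 * ((0 : ℕ) : ℤ)) (by simp) (𝟙 O.E) := by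
      rw [O.hpow_zero, ShiftedHom.mk₀, Category.id_comp]
    rw [hzero, ShiftedHom.mk₀_id_comp]
  | succ m ih =>
    obtain rfl : k = m + n + 1 := by omega
    have hsucc (k : ℕ) : O.hpow (k + 1) = ShiftedHom.comp O.h (O.hpow k) (by push_cast; ring) :=
      O.hpow_succ k
    rw [hsucc, hsucc, ih rfl, ShiftedHom.comp_assoc]
    push_cast; ring

theorem exists_eq_two_mul {n : ℤ} {f : O.E ⟶ O.E⟦n⟧} (hf : f ≠ 0) :
    ∃ m : ℕ, m ≤ d ∧ n = 2 * (m : ℤ) := by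
  by_contra h
  exact hf (O.hom_rank_zero n h f)

theorem exists_smul_hpow_eq {m : ℕ} (hm : m ≤ d) (f : O.E ⟶ O.E⟦2 * (m : ℤ)⟧) :
    ∃ c : ℂ, c • O.hpow m = f :=
  (finrank_eq_one_iff_of_nonzero' _ (O.hpow_ne_zero m hm)).1 (O.hom_rank_one m hm) f

/-- The power `h ^ m` of the generator of `Hom^*(E, E)`, as a morphism between shifts of `E`. -/
noncomputable def shiftedPow (m : ℕ) (hab : 2 * (m : ℤ) + a = b) : O.E⟦a⟧ ⟶ O.E⟦b⟧ :=
  (O.hpow m)⟦a⟧' ≫ (shiftFunctorAdd' D _ a b hab).inv.app O.E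

theorem shiftedPow_comp {m n k : ℕ} {c : ℤ} (hk : k = m + n) (hab : 2 * (m : ℤ) + a = b)
    (hbc : 2 * (n : ℤ) + b = c) :
    O.shiftedPow m hab ≫ O.shiftedPow n hbc =
      O.shiftedPow k (by rw [hk]; push_cast; linarith) := by
  have heq_comp {j : ℕ} {e : ℤ} (he : 2 * (j : ℤ) + a = e) : O.shiftedPow j he =
      ShiftedHom.comp (𝟙 (O.E⟦a⟧) : ShiftedHom (O.E⟦a⟧) O.E a) (O.hpow j) he := by
    simp [ShiftedHom.comp, shiftedPow]
  rw [heq_comp, heq_comp (e := c), O.hpow_eq_comp hk, ← ShiftedHom.comp_assoc _ _ _ hab]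
  · rfl
  · linarith

theorem shiftedPow_ne_zero {m : ℕ} (hm : m ≤ d) (hab : 2 * (m : ℤ) + a = b) :
    O.shiftedPow m hab ≠ 0 := fun h =>
  O.hpow_ne_zero m hm <| (shiftFunctor D a).map_injective <| by
    rw [Functor.map_zero, ← cancel_mono ((shiftFunctorAdd' D _ a b hab).inv.app O.E), zero_comp]
    exact h

/-- `X` is isomorphic to `E⟦a⟧`. -/
def IsShift (X : D) (a : ℤ) : Prop := Nonempty (X ≅ O.E⟦a⟧)

theorem isShift_shift (a : ℤ) : O.IsShift (O.E⟦a⟧) a := ⟨Iso.refl _⟩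

theorem isShift_self : O.IsShift O.E 0 := ⟨(shiftFunctorZero D ℤ).symm.app O.E⟩

variable {O}

namespace IsShift

theorem of_iso (hX : O.IsShift X a) (e : X ≅ Y) : O.IsShift Y a := hX.map e.symm.trans

theorem shift (hX : O.IsShift X a) (n : ℤ) : O.IsShift (X⟦n⟧) (a + n) :=
  hX.map fun e => (shiftFunctor D n).mapIso e ≪≫ (shiftFunctorAdd D a n).symm.app O.E

theorem exists_eq_shiftedPow (eX : X ≅ O.E⟦a⟧) (eY : Y ≅ O.E⟦b⟧) {x : X ⟶ Y} (hx : x ≠ 0) :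
    ∃ (m : ℕ) (hab : 2 * (m : ℤ) + a = b), m ≤ d ∧
      (∃ eX' : X ≅ O.E⟦a⟧, x = eX'.hom ≫ O.shiftedPow m hab ≫ eY.inv) ∧
      ∃ eY' : Y ≅ O.E⟦b⟧, x = eX.hom ≫ O.shiftedPow m hab ≫ eY'.inv := by
  obtain ⟨n, hn⟩ : ∃ n, n + a = b := ⟨b - a, by ring⟩
  let α := (shiftFunctorAdd' D n a b hn).app O.E
  obtain ⟨f, hf⟩ := (shiftFunctor D a).map_surjective (eX.inv ≫ x ≫ eY.hom ≫ α.hom)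
  obtain rfl : x = eX.hom ≫ f⟦a⟧' ≫ α.inv ≫ eY.inv := by simp [hf]
  obtain ⟨m, hm, rfl⟩ := O.exists_eq_two_mul (f := f) (by rintro rfl; simp at hx)
  obtain ⟨c, rfl⟩ := O.exists_smul_hpow_eq hm f
  have hc : c ≠ 0 := by rintro rfl; simp at hx
  let σ (W : D) : W ≅ W := ⟨c • 𝟙 W, c⁻¹ • 𝟙 W, by simp [smul_smul, hc], by simp [smul_smul, hc]⟩
  refine ⟨m, hn, hm, ⟨eX ≪≫ (shiftFunctor D a).mapIso (σ _), ?_⟩,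
    ⟨eY ≪≫ α ≪≫ (shiftFunctor D a).mapIso (σ _).symm ≪≫ α.symm, ?_⟩⟩
  · have hσ : c • O.hpow m = (σ _).hom ≫ O.hpow m := by simp [σ]
    simp [hσ, shiftedPow, α]
  · have hσ : c • O.hpow m = O.hpow m ≫ (σ _).hom := by simp [σ]
    simp [hσ, shiftedPow, α]

theorem exists_eq_two_mul_add (hX : O.IsShift X a) (hY : O.IsShift Y b) {x : X ⟶ Y}
    (hx : x ≠ 0) : ∃ m : ℕ, m ≤ d ∧ b = 2 * (m : ℤ) + a := by
  obtain ⟨⟨eX⟩, ⟨eY⟩⟩ := And.intro hX hY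
  obtain ⟨m, hab, hm, -⟩ := exists_eq_shiftedPow eX eY hx
  exact ⟨m, hm, hab.symm⟩

theorem exists_ne_zero (hX : O.IsShift X a) (hY : O.IsShift Y b) {m : ℕ} (hm : m ≤ d)
    (hab : 2 * (m : ℤ) + a = b) : ∃ x : X ⟶ Y, x ≠ 0 := by
  obtain ⟨⟨eX⟩, ⟨eY⟩⟩ := And.intro hX hY
  refine ⟨eX.hom ≫ O.shiftedPow m hab ≫ eY.inv, fun h => O.shiftedPow_ne_zero hm hab ?_⟩
  simpa using eX.inv ≫= h =≫ eY.hom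

theorem not_isZero (hX : O.IsShift X a) : ¬IsZero X := fun h => by
  obtain ⟨x, hx⟩ := hX.exists_ne_zero hX (Nat.zero_le d) (by simp)
  exact hx (h.eq_of_src x 0)

theorem exists_eq_comp_left (hX : O.IsShift X a) (hX' : O.IsShift X' a') (hY : O.IsShift Y b)
    (ha : a' ≤ a) {u : X ⟶ Y} (hu : u ≠ 0) (x : X' ⟶ Y) : ∃ y, x = y ≫ u := by
  obtain rfl | hx := eq_or_ne x 0
  · exact ⟨0, zero_comp.symm⟩
  obtain ⟨⟨eX⟩, ⟨eX'⟩, ⟨eY⟩⟩ := And.intro hX (And.intro hX' hY)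
  obtain ⟨m, hab, -, ⟨e, rfl⟩, -⟩ := exists_eq_shiftedPow eX eY hu
  obtain ⟨k, hab', -, ⟨e', rfl⟩, -⟩ := exists_eq_shiftedPow eX' eY hx
  obtain ⟨n, rfl⟩ : ∃ n, k = n + m := ⟨k - m, by omega⟩
  have haa : 2 * (n : ℤ) + a' = a := by omega
  refine ⟨e'.hom ≫ O.shiftedPow n haa ≫ e.inv, ?_⟩
  simp [← O.shiftedPow_comp rfl haa hab]

theorem exists_eq_comp_right (hX : O.IsShift X a) (hY : O.IsShift Y b) (hY' : O.IsShift Y' b')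
    (hb : b ≤ b') {u : X ⟶ Y} (hu : u ≠ 0) (x : X ⟶ Y') : ∃ y, x = u ≫ y := by
  obtain rfl | hx := eq_or_ne x 0
  · exact ⟨0, comp_zero.symm⟩
  obtain ⟨⟨eX⟩, ⟨eY⟩, ⟨eY'⟩⟩ := And.intro hX (And.intro hY hY')
  obtain ⟨m, hab, -, -, ⟨e, rfl⟩⟩ := exists_eq_shiftedPow eX eY hu
  obtain ⟨k, hab', -, -, ⟨e', rfl⟩⟩ := exists_eq_shiftedPow eX eY' hx
  obtain ⟨n, rfl⟩ : ∃ n, k = m + n := ⟨k - m, by omega⟩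
  have hbb : 2 * (n : ℤ) + b = b' := by omega
  refine ⟨e.hom ≫ O.shiftedPow n hbb ≫ e'.inv, ?_⟩
  simp [← O.shiftedPow_comp rfl hab hbb]

theorem isIso_of_ne_zero (hX : O.IsShift X a) (hY : O.IsShift Y a) {x : X ⟶ Y} (hx : x ≠ 0) :
    IsIso x := by
  obtain ⟨y, hy⟩ := hX.exists_eq_comp_left hY hY le_rfl hx (𝟙 Y)
  obtain ⟨z, hz⟩ := hX.exists_eq_comp_right hY hX le_rfl hx (𝟙 X)
  have : IsSplitMono x := .mk' ⟨z, hz.symm⟩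
  have : IsSplitEpi x := .mk' ⟨y, hy.symm⟩
  exact isIso_of_mono_of_isSplitEpi x

theorem exists_iso_hom_comp_eq (hX : O.IsShift X a) (hX' : O.IsShift X' a) (hY : O.IsShift Y b)
    {u : X ⟶ Y} {v : X' ⟶ Y} (hu : u ≠ 0) (hv : v ≠ 0) : ∃ e : X ≅ X', e.hom ≫ v = u := by
  obtain ⟨y, rfl⟩ := hX'.exists_eq_comp_left hX hY le_rfl hv u
  have : IsIso y := hX.isIso_of_ne_zero hX' (by rintro rfl; exact hu zero_comp)
  exact ⟨asIso y, rfl⟩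

end IsShift

end PdObject

end PdObject

theorem exists_pi_and_eq_zero_of_zero {ι : Type*} {Y : ι → Type*} [∀ i, Zero (Y i)]
    {R : ∀ i, Y i → Prop} (h : ∀ i, ∃ y, R i y) :
    ∃ c : ∀ i, Y i, ∀ i, R i (c i) ∧ (R i 0 → c i = 0) := by
  have h' (i : ι) : ∃ y, R i y ∧ (R i 0 → y = 0) := by
    by_cases hi : R i 0
    · exact ⟨0, hi, fun _ => rfl⟩
    · exact (h i).imp fun _ hy => ⟨hy, fun h₀ => absurd h₀ hi⟩
  exact ⟨fun i => (h' i).choose, fun i => (h' i).choose_spec⟩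

section Monomial

open biproduct

variable {D : Type*} [Category D] [Preadditive D] [HasFiniteBiproducts D]
  {ι κ : Type} [Finite ι] [Finite κ] {S : ι → D} {T : κ → D}

/-- The positions of the nonzero entries of the matrix of `θ` that are the only nonzero entry of
their row and of their column. -/
def isolatedEntries (θ : ⨁ S ⟶ ⨁ T) : Set (ι × κ) :=
  {p | components θ p.1 p.2 ≠ 0 ∧
    (∀ j ≠ p.2, components θ p.1 j = 0) ∧ ∀ i ≠ p.1, components θ i p.2 = 0}

/-- The matrix of `θ` is monomial: it has at most one nonzero entry in each row and in each
column. -/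
def IsMonomial (θ : ⨁ S ⟶ ⨁ T) : Prop :=
  ∀ i j, components θ i j ≠ 0 → (i, j) ∈ isolatedEntries θ

/-- The automorphism `1 - p q` of `X`, for `q p = 0`. -/
@[simps]
def isoOfCompEqZero {X Y : D} (p : X ⟶ Y) (q : Y ⟶ X) (h : q ≫ p = 0) : X ≅ X where
  hom := 𝟙 X - p ≫ q
  inv := 𝟙 X + p ≫ q
  hom_inv_id := by simp [reassoc_of% h]
  inv_hom_id := by simp [reassoc_of% h]

theorem exists_components_conj_eq (θ : ⨁ S ⟶ ⨁ T) {i₀ : ι} {j₀ : κ} (c : ∀ i, S i ⟶ S i₀)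
    (hc : c i₀ = 0) (f : ∀ j, T j₀ ⟶ T j) (hf : f j₀ = 0) :
    ∃ (e : ⨁ S ≅ ⨁ S) (e' : ⨁ T ≅ ⨁ T), ∀ i j, components (e.hom ≫ θ ≫ e'.hom) i j =
      components θ i j - c i ≫ components θ i₀ j -
        (components θ i j₀ - c i ≫ components θ i₀ j₀) ≫ f j := by
  refine ⟨isoOfCompEqZero (desc c) (biproduct.ι S i₀) (by simp [hc]),
    isoOfCompEqZero (biproduct.π T j₀) (lift f) (by simp [hf]), fun i j => ?_⟩
  simp only [components, isoOfCompEqZero_hom, Preadditive.sub_comp, Preadditive.comp_sub,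
    Category.assoc, Category.id_comp, ι_desc_assoc, lift_π, Category.comp_id]

theorem exists_insert_subset_isolatedEntries {θ : ⨁ S ⟶ ⨁ T} {i₀ : ι} {j₀ : κ}
    (hne : components θ i₀ j₀ ≠ 0)
    (hcol : ∀ i, ∃ y, components θ i j₀ = y ≫ components θ i₀ j₀)
    (hrow : ∀ j, ∃ y, components θ i₀ j = components θ i₀ j₀ ≫ y) :
    ∃ (e : ⨁ S ≅ ⨁ S) (e' : ⨁ T ≅ ⨁ T),
      insert (i₀, j₀) (isolatedEntries θ) ⊆ isolatedEntries (e.hom ≫ θ ≫ e'.hom) := by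
  obtain ⟨c, hc⟩ := exists_pi_and_eq_zero_of_zero
    (R := fun i (y : S i ⟶ S i₀) => i ≠ i₀ → components θ i j₀ = y ≫ components θ i₀ j₀)
    fun i => (hcol i).imp fun _ hy _ => hy
  obtain ⟨f, hf⟩ := exists_pi_and_eq_zero_of_zero
    (R := fun j (y : T j₀ ⟶ T j) => j ≠ j₀ → components θ i₀ j = components θ i₀ j₀ ≫ y)
    fun j => (hrow j).imp fun _ hy _ => hy
  have hcz : c i₀ = 0 := (hc i₀).2 (absurd rfl)
  have hfz : f j₀ = 0 := (hf j₀).2 (absurd rfl)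
  obtain ⟨e, e', hM⟩ := exists_components_conj_eq θ c hcz f hfz
  have hpivot : (i₀, j₀) ∈ isolatedEntries (e.hom ≫ θ ≫ e'.hom) := by
    refine ⟨?_, fun j hj => ?_, fun i hi => ?_⟩ <;> rw [hM]
    · simpa [hcz, hfz]
    · simp [hcz, ← (hf j).1 hj]
    · simp [hfz, ← (hc i).1 hi]
  refine ⟨e, e', Set.insert_subset hpivot fun ⟨i, j⟩ hij => ?_⟩
  obtain ⟨hij, hr, hs⟩ := id hij
  by_cases hi : i = i₀
  · subst hi
    obtain rfl : j₀ = j := by_contra fun h => hne (hr _ h)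
    exact hpivot
  by_cases hj : j = j₀
  · subst hj
    exact absurd (hs _ (Ne.symm hi)) hne
  have hi₀ : components θ i j₀ = 0 := hr _ (Ne.symm hj)
  have hj₀ : components θ i₀ j = 0 := hs _ (Ne.symm hi)
  have hci : c i = 0 := (hc i).2 fun _ => by rw [hi₀, zero_comp]
  have hfj : f j = 0 := (hf j).2 fun _ => by rw [hj₀, comp_zero]
  refine ⟨?_, fun j' h => ?_, fun i' h => ?_⟩ <;> rw [hM]
  · simpa [hci, hfj] using hij
  · simpa [hci, hi₀] using hr j' h
  · simpa [hfj, hj₀] using hs i' h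

theorem exists_isolatedEntries_ssubset (a : ι → ℤ) (b : κ → ℤ)
    (hleft : ∀ {i i' : ι} {j : κ} {u : S i ⟶ T j}, u ≠ 0 → a i' ≤ a i →
      ∀ x : S i' ⟶ T j, ∃ y, x = y ≫ u)
    (hright : ∀ {i : ι} {j j' : κ} {u : S i ⟶ T j}, u ≠ 0 → b j ≤ b j' →
      ∀ x : S i ⟶ T j', ∃ y, x = u ≫ y) {θ : ⨁ S ⟶ ⨁ T} (hθ : ¬ IsMonomial θ) :
    ∃ (e : ⨁ S ≅ ⨁ S) (e' : ⨁ T ≅ ⨁ T),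
      isolatedEntries θ ⊂ isolatedEntries (e.hom ≫ θ ≫ e'.hom) := by
  let bad : Set (ι × κ) := {p | components θ p.1 p.2 ≠ 0 ∧ p ∉ isolatedEntries θ}
  have hbad : bad.Nonempty := by
    obtain ⟨i, j, h⟩ : ∃ i j, ¬ (components θ i j ≠ 0 → (i, j) ∈ isolatedEntries θ) := by
      simpa only [IsMonomial, not_forall] using hθ
    exact ⟨(i, j), Classical.not_imp.1 h⟩
  -- A pivot minimizing `b j - a i` divides every entry of its row and of its column.
  obtain ⟨⟨i₀, j₀⟩, ⟨hne, hmem⟩, hmin⟩ :=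
    Set.exists_min_image bad (fun p => b p.2 - a p.1) (Set.toFinite _) hbad
  have hcol (i : ι) : ∃ y, components θ i j₀ = y ≫ components θ i₀ j₀ := by
    obtain h | h := eq_or_ne (components θ i j₀) 0
    · exact ⟨0, by simp [h]⟩
    have hle : b j₀ - a i₀ ≤ b j₀ - a i := hmin (i, j₀) ⟨h, fun h' => by
      obtain rfl : i₀ = i := by_contra fun hi => hne (h'.2.2 _ hi)
      exact hmem h'⟩
    exact hleft hne ((sub_le_sub_iff_left _).1 hle) _
  have hrow (j : κ) : ∃ y, components θ i₀ j = components θ i₀ j₀ ≫ y := by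
    obtain h | h := eq_or_ne (components θ i₀ j) 0
    · exact ⟨0, by simp [h]⟩
    have hle : b j₀ - a i₀ ≤ b j - a i₀ := hmin (i₀, j) ⟨h, fun h' => by
      obtain rfl : j₀ = j := by_contra fun hj => hne (h'.2.1 _ hj)
      exact hmem h'⟩
    exact hright hne ((sub_le_sub_iff_right _).1 hle) _
  obtain ⟨e, e', hsub⟩ := exists_insert_subset_isolatedEntries hne hcol hrow
  exact ⟨e, e', (Set.ssubset_insert hmem).trans_subset hsub⟩

theorem exists_isMonomial (a : ι → ℤ) (b : κ → ℤ)
    (hleft : ∀ {i i' : ι} {j : κ} {u : S i ⟶ T j}, u ≠ 0 → a i' ≤ a i →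
      ∀ x : S i' ⟶ T j, ∃ y, x = y ≫ u)
    (hright : ∀ {i : ι} {j j' : κ} {u : S i ⟶ T j}, u ≠ 0 → b j ≤ b j' →
      ∀ x : S i ⟶ T j', ∃ y, x = u ≫ y) (θ : ⨁ S ⟶ ⨁ T) :
    ∃ (e : ⨁ S ≅ ⨁ S) (e' : ⨁ T ≅ ⨁ T), IsMonomial (e.hom ≫ θ ≫ e'.hom) := by
  induction hs : isolatedEntries θ using WellFoundedGT.induction generalizing θ with
  | ind s ih =>
    subst hs
    by_cases hθ : IsMonomial θ
    · exact ⟨Iso.refl _, Iso.refl _, by simpa using hθ⟩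
    obtain ⟨e, e', hlt⟩ := exists_isolatedEntries_ssubset a b hleft hright hθ
    obtain ⟨e₁, e₁', h⟩ := ih _ hlt (e.hom ≫ θ ≫ e'.hom) rfl
    exact ⟨e₁ ≪≫ e, e' ≪≫ e₁', by simpa using h⟩

namespace IsMonomial

variable {θ : ⨁ S ⟶ ⨁ T}

theorem ι_comp (hθ : IsMonomial θ) {i : ι} {j : κ} (hij : components θ i j ≠ 0) :
    biproduct.ι S i ≫ θ = components θ i j ≫ biproduct.ι T j := by
  refine hom_ext _ _ fun j' => ?_
  obtain rfl | hj := eq_or_ne j' j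
  · simp [components]
  · simpa [components, ι_π_ne _ hj.symm] using (hθ i j hij).2.1 j' hj

theorem comp_π (hθ : IsMonomial θ) {i : ι} {j : κ} (hij : components θ i j ≠ 0) :
    θ ≫ biproduct.π T j = biproduct.π S i ≫ components θ i j := by
  refine hom_ext' _ _ fun i' => ?_
  obtain rfl | hi := eq_or_ne i' i
  · simp [components]
  · simpa [components, ι_π_ne_assoc _ hi] using (hθ i j hij).2.2 i' hi

theorem exists_ι_comp_eq_zero_or (hθ : IsMonomial θ) (hcard : Nat.card κ ≤ Nat.card ι) :
    (∃ i, biproduct.ι S i ≫ θ = 0) ∨ ∀ j, ∃ i, components θ i j ≠ 0 := by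
  refine or_iff_not_imp_left.2 fun h => ?_
  have hex (i : ι) : ∃ j, components θ i j ≠ 0 := by
    by_contra! hi
    exact h ⟨i, hom_ext _ _ fun j => by simpa [components] using hi j⟩
  choose σ hσ using hex
  have hinj : Function.Injective σ := fun i i' hii => by
    by_contra hne
    exact hσ i' (hii ▸ (hθ i (σ i) (hσ i)).2.2 i' (Ne.symm hne))
  intro j
  obtain ⟨i, rfl⟩ := (hinj.bijective_of_nat_card_le hcard).2 j
  exact ⟨i, hσ i⟩

end IsMonomial

end Monomial

section ArrowIso

open biproduct

variable {D D' : Type*} [Category D] [Preadditive D] [HasFiniteBiproducts D] [Category D']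
  [Preadditive D'] {ι κ : Type} [Finite ι] [Finite κ] {S : ι → D}
  {T : κ → D} (F F' : D ⥤ D') [F.Additive] [F'.Additive]

/-- The conjugate of `F.map θ` by the isomorphisms `F(⨁ S) ≅ ⨁ F(S i)` and `F(⨁ T) ≅ ⨁ F(T j)`,
used to compute `F.map θ` entrywise. -/
noncomputable def mapComponents (θ : ⨁ S ⟶ ⨁ T) :
    (⨁ fun i => F.obj (S i)) ⟶ ⨁ fun j => F.obj (T j) :=
  (F.mapBiproduct S).inv ≫ F.map θ ≫ (F.mapBiproduct T).hom

theorem nonempty_arrow_iso_mapComponents (θ : ⨁ S ⟶ ⨁ T) :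
    Nonempty (Arrow.mk (F.map θ) ≅ Arrow.mk (mapComponents F θ)) :=
  ⟨Arrow.isoMk (F.mapBiproduct S) (F.mapBiproduct T) ((F.mapBiproduct S).hom_inv_id_assoc _)⟩

variable [HasFiniteBiproducts D']

theorem components_mapComponents (θ : ⨁ S ⟶ ⨁ T) (i : ι) (j : κ) :
    components (mapComponents F θ) i j = F.map (components θ i j) := by
  have hι : biproduct.ι (fun i => F.obj (S i)) i ≫ (F.mapBiproduct S).inv =
      F.map (biproduct.ι S i) :=
    ι_desc (fun i => F.map (biproduct.ι S i)) i
  have hπ : (F.mapBiproduct T).hom ≫ biproduct.π (fun j => F.obj (T j)) j =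
      F.map (biproduct.π T j) :=
    lift_π (fun j => F.map (biproduct.π T j)) j
  simp only [components, mapComponents, Category.assoc, hπ, reassoc_of% hι, F.map_comp]

theorem nonempty_arrow_iso_of_components (θ : ⨁ S ⟶ ⨁ T) (εS : ∀ i, F.obj (S i) ≅ F'.obj (S i))
    (εT : ∀ j, F.obj (T j) ≅ F'.obj (T j))
    (hε : ∀ i j, F.map (components θ i j) ≫ (εT j).hom =
      (εS i).hom ≫ F'.map (components θ i j)) :
    Nonempty (Arrow.mk (F.map θ) ≅ Arrow.mk (F'.map θ)) := by
  obtain ⟨e⟩ := nonempty_arrow_iso_mapComponents F θ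
  obtain ⟨e'⟩ := nonempty_arrow_iso_mapComponents F' θ
  have h : (mapIso εS).hom ≫ mapComponents F' θ = mapComponents F θ ≫ (mapIso εT).hom := by
    refine hom_ext' _ _ fun i => hom_ext _ _ fun j => ?_
    have hij := hε i j
    rw [← components_mapComponents, ← components_mapComponents] at hij
    simp only [components, Category.assoc] at hij
    simp [hij]
  have e'' : Arrow.mk (mapComponents F θ) ≅ Arrow.mk (mapComponents F' θ) :=
    Arrow.isoMk (mapIso εS) (mapIso εT) h
  exact ⟨e ≪≫ e'' ≪≫ e'.symm⟩

variable [F.Faithful] [F'.Faithful] {d : ℕ}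

theorem IsMonomial.nonempty_arrow_iso [HasShift D' ℤ] [Linear ℂ D'] {O : PdObject D' d}
    {a : ι → ℤ} {b : κ → ℤ} {θ : ⨁ S ⟶ ⨁ T} (hθ : IsMonomial θ)
    (hS : ∀ i, O.IsShift (F.obj (S i)) (a i)) (hS' : ∀ i, O.IsShift (F'.obj (S i)) (a i))
    (hT : ∀ j, O.IsShift (F.obj (T j)) (b j)) (hT' : ∀ j, O.IsShift (F'.obj (T j)) (b j)) :
    Nonempty (Arrow.mk (F.map θ) ≅ Arrow.mk (F'.map θ)) := by
  have hεT (j : κ) : Nonempty (F.obj (T j) ≅ F'.obj (T j)) :=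
    Nonempty.map2 (· ≪≫ ·.symm) (hT j) (hT' j)
  let εT (j : κ) := (hεT j).some
  have hεS (i : ι) : ∃ εS : F.obj (S i) ≅ F'.obj (S i), ∀ j,
      F.map (components θ i j) ≫ (εT j).hom = εS.hom ≫ F'.map (components θ i j) := by
    by_cases hi : ∃ j, components θ i j ≠ 0
    · obtain ⟨j, hj⟩ := hi
      have hu : F.map (components θ i j) ≫ (εT j).hom ≠ 0 := by simpa [F.map_eq_zero_iff]
      have hv : F'.map (components θ i j) ≠ 0 := by simpa [F'.map_eq_zero_iff]
      obtain ⟨εS, h⟩ := (hS i).exists_iso_hom_comp_eq (hS' i) (hT' j) hu hv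
      refine ⟨εS, fun j' => ?_⟩
      obtain rfl | hj' := eq_or_ne j' j
      · exact h.symm
      · simp [(hθ i j hj).2.1 j' hj']
    · push Not at hi
      exact (Nonempty.map2 (· ≪≫ ·.symm) (hS i) (hS' i)).elim fun e => ⟨e, fun j => by simp [hi j]⟩
  choose εS hε using hεS
  exact nonempty_arrow_iso_of_components F F' θ εS εT hε

end ArrowIso

section Cones

variable {D : Type*} [Category D] [Preadditive D] [HasZeroObject D] [HasShift D ℤ]
  [∀ n : ℤ, (shiftFunctor D n).Additive] [Pretriangulated D] {A B X A' B' X' : D} {f : A ⟶ B}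
  {g : B ⟶ X} {h : X ⟶ A⟦(1 : ℤ)⟧} {f' : A' ⟶ B'} {g' : B' ⟶ X'} {h' : X' ⟶ A'⟦(1 : ℤ)⟧}

theorem nonempty_retract_of_retractArrow (hT : Triangle.mk f g h ∈ distTriang D)
    (hT' : Triangle.mk f' g' h' ∈ distTriang D) (r : RetractArrow f f') :
    Nonempty (Retract X X') := by
  obtain ⟨c : X ⟶ X', hgc : g ≫ c = r.i.right ≫ g', hch : h ≫ r.i.left⟦(1 : ℤ)⟧' = c ≫ h'⟩ :=
    complete_distinguished_triangle_morphism _ _ hT hT' r.i.left r.i.right r.i_w.symm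
  obtain ⟨c' : X' ⟶ X, hgc' : g' ≫ c' = r.r.right ≫ g,
      hch' : h' ≫ r.r.left⟦(1 : ℤ)⟧' = c' ≫ h⟩ :=
    complete_distinguished_triangle_morphism _ _ hT' hT r.r.left r.r.right r.r_w.symm
  have hA : r.i.left ≫ r.r.left = 𝟙 A := r.left.retract
  have hB : r.i.right ≫ r.r.right = 𝟙 B := r.right.retract
  have hg : g ≫ c ≫ c' = g := by
    rw [reassoc_of% hgc, hgc', reassoc_of% hB]
    exact Category.id_comp g
  have hh : (c ≫ c') ≫ h = h := by
    rw [Category.assoc, ← hch', ← reassoc_of% hch, ← Functor.map_comp, hA,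
      CategoryTheory.Functor.map_id, Category.comp_id]
  let φ : Triangle.mk f g h ⟶ Triangle.mk f g h :=
    { hom₁ := 𝟙 A
      hom₂ := 𝟙 B
      hom₃ := c ≫ c'
      comm₁ := (Category.comp_id f).trans (Category.id_comp f).symm
      comm₂ := hg.trans (Category.id_comp g).symm
      comm₃ := by
        change h ≫ (𝟙 A)⟦(1 : ℤ)⟧' = (c ≫ c') ≫ h
        rw [hh, CategoryTheory.Functor.map_id, Category.comp_id] }
  have : IsIso (c ≫ c') := isIso₃_of_isIso₁₂ φ hT hT (inferInstanceAs (IsIso (𝟙 A)))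
    (inferInstanceAs (IsIso (𝟙 B)))
  exact ⟨⟨c, c' ≫ inv (c ≫ c'), by rw [← Category.assoc, IsIso.hom_inv_id]⟩⟩

theorem exists_comp_eq_map_shift (hT : Triangle.mk f g h ∈ distTriang D) {W : D} {x : W ⟶ A}
    (hx : x ≫ f = 0) : ∃ y : W⟦(1 : ℤ)⟧ ⟶ X, y ≫ h = x⟦(1 : ℤ)⟧' := by
  obtain ⟨y, hy⟩ := (IsHomExact.of_distinguished hT).isWeakKernel₁.exists_lift (x⟦(1 : ℤ)⟧')
    (by rw [← Functor.map_comp, hx, Functor.map_zero])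
  exact ⟨y, hy.symm⟩

theorem IsExtension.eq_zero_of_forall_eq_zero {W Y Z : D} (hE : IsExtension X Y Z)
    (hX : ∀ x : W ⟶ X, x = 0) (hZ : ∀ x : W ⟶ Z, x = 0) (x : W ⟶ Y) : x = 0 := by
  obtain ⟨f, g, h, hT⟩ := hE
  obtain ⟨y, rfl⟩ := Triangle.coyoneda_exact₂ _ hT x (hZ _)
  exact (hX y).symm ▸ zero_comp

theorem nonempty_iso_of_map_arrow_iso (K : Type*) {D' : Type*} [Field K] [Category D']
    [Preadditive D'] [HasShift D' ℤ] [HasZeroObject D'] [∀ n : ℤ, (shiftFunctor D' n).Additive]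
    [Pretriangulated D'] [Linear K D'] [∀ X Y : D', Module.Finite K (X ⟶ Y)] (F F' : D ⥤ D')
    [F.IsEquivalence] [F'.IsEquivalence]
    (c : shiftFunctor D (1 : ℤ) ⋙ F ≅ F ⋙ shiftFunctor D' (1 : ℤ))
    (c' : shiftFunctor D (1 : ℤ) ⋙ F' ≅ F' ⋙ shiftFunctor D' (1 : ℤ))
    (hT : Triangle.mk f g h ∈ distTriang D) (e : Arrow.mk (F.map f) ≅ Arrow.mk (F'.map f)) :
    Nonempty (F.obj X ≅ F'.obj X) := by
  obtain ⟨k, hk⟩ := exists_distinguished_map K F c hT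
  obtain ⟨k', hk'⟩ := exists_distinguished_map K F' c' hT
  obtain ⟨e', -⟩ := exists_iso_of_arrow_iso _ _ hk hk' e
  exact ⟨Triangle.π₃.mapIso e'⟩

end Cones

theorem nonempty_iso_of_retract {D : Type*} [Category D] [HasZeroMorphisms D] {X Y : D}
    (r : Retract X Y) (hX : ¬IsZero X) (hY : ∀ f : Y ⟶ Y, f ≠ 0 → IsIso f) :
    Nonempty (X ≅ Y) := by
  have hne : r.r ≫ r.i ≠ 0 := fun h => hX <| (IsZero.iff_id_eq_zero X).2 <| calc
    𝟙 X = r.i ≫ (r.r ≫ r.i) ≫ r.r := by simp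
    _ = 0 := by simp [h]
  have := hY _ hne
  have : IsSplitEpi r.i := .mk' ⟨inv (r.r ≫ r.i) ≫ r.r, by simp⟩
  have : IsIso r.i := isIso_of_mono_of_isSplitEpi r.i
  exact ⟨asIso r.i⟩

namespace PdObject.IsShift

variable {D : Type*} [Category D] [Preadditive D] [HasZeroObject D] [HasShift D ℤ]
  [∀ n : ℤ, (shiftFunctor D n).Additive] [Pretriangulated D] [Linear ℂ D] {d : ℕ}
  {O : PdObject D d} {X Y Z : D} {a b : ℤ} {u : X ⟶ Y} {v : Y ⟶ Z} {w : Z ⟶ X⟦(1 : ℤ)⟧}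

theorem not_isZero_of_distinguished (hX : O.IsShift X a) (hY : O.IsShift Y b) (hab : a < b)
    (hT : Triangle.mk u v w ∈ distTriang D) : ¬IsZero Z := fun hZ => by
  have : IsIso u := (Triangle.isZero₃_iff_isIso₁ _ hT).1 hZ
  have hu : inv u ≠ 0 := fun h => hX.not_isZero <| (IsZero.iff_id_eq_zero X).2 <| by
    rw [← IsIso.hom_inv_id u, h, comp_zero]
  obtain ⟨m, -, h⟩ := hY.exists_eq_two_mul_add hX hu
  omega

theorem eq_zero_of_distinguished {V : D} (hX : O.IsShift X a) (hY : O.IsShift Y b)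
    (hV : O.IsShift V b) (hu : u ≠ 0) (hT : Triangle.mk u v w ∈ distTriang D) (x : Z ⟶ V) :
    x = 0 := by
  have huv : u ≫ v = 0 := comp_distTriang_mor_zero₁₂ _ hT
  have hvx : v ≫ x = 0 := by
    by_contra hne
    have := hY.isIso_of_ne_zero hV hne
    exact hu ((cancel_mono (v ≫ x)).1 (by rw [reassoc_of% huv, zero_comp, zero_comp]))
  obtain ⟨y, rfl⟩ : ∃ y : X⟦(1 : ℤ)⟧ ⟶ V, x = w ≫ y := Triangle.yoneda_exact₃ _ hT x hvx
  by_contra hne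
  obtain ⟨m, -, h⟩ := hX.exists_eq_two_mul_add hY hu
  obtain ⟨m', -, h'⟩ := (hX.shift 1).exists_eq_two_mul_add hV (x := y) (by
    rintro rfl
    exact hne comp_zero)
  omega

end PdObject.IsShift

namespace PdTwist

variable {D : Type*} [Category D] [Preadditive D] [HasZeroObject D] [HasShift D ℤ]
  [∀ n : ℤ, (shiftFunctor D n).Additive] [Pretriangulated D] [HasFiniteBiproducts D]
  [Linear ℂ D] {d : ℕ} (tw : PdTwist D d)

instance : tw.P.functor.Additive := Functor.additive_of_preserves_binary_products _

instance : tw.P.functor.CommShift ℤ := tw.commShift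

/-- A presentation of the inner cone `T F` as the cone of a monomial morphism between direct sums
of shifts of `E`. The integers `deg i` are the shifts occurring in `H F`, so that the `T i` are
the summands of `H F` and the `S i` those of `(H F)⟦-2⟧`. -/
structure MonomialPresentation (F : D) where
  k : ℕ
  deg : Fin k → ℤ
  card_deg (n : ℤ) :
    (Finset.univ.filter fun i => deg i = -n).card = Module.finrank ℂ (tw.E ⟶ F⟦n⟧)
  S : Fin k → D
  T : Fin k → D
  isShift_S (i : Fin k) : tw.IsShift (S i) (deg i - 2)
  isShift_T (i : Fin k) : tw.IsShift (T i) (deg i)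
  θ : ⨁ S ⟶ ⨁ T
  isMonomial : IsMonomial θ
  ι : ⨁ T ⟶ tw.T F
  π : tw.T F ⟶ (⨁ S)⟦(1 : ℤ)⟧
  distinguished : Triangle.mk θ ι π ∈ distTriang D

theorem nonempty_monomialPresentation (F : D) : Nonempty (tw.MonomialPresentation F) := by
  obtain ⟨k, deg, ⟨e⟩, hdeg⟩ := tw.H_iso F
  let T (i : Fin k) : D := tw.E⟦deg i⟧
  let S (i : Fin k) : D := (T i)⟦(-2 : ℤ)⟧
  have hT (i : Fin k) : tw.IsShift (T i) (deg i) := tw.isShift_shift (deg i)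
  have hS (i : Fin k) : tw.IsShift (S i) (deg i - 2) := (hT i).shift (-2)
  let eS : (tw.H F)⟦(-2 : ℤ)⟧ ≅ ⨁ S :=
    (shiftFunctor D (-2 : ℤ)).mapIso e ≪≫ (shiftFunctor D (-2 : ℤ)).mapBiproduct T
  obtain ⟨a, b, hθ⟩ := exists_isMonomial (fun i => deg i - 2) deg
    (fun hu hle x => (hS _).exists_eq_comp_left (hS _) (hT _) hle hu x)
    (fun hu hle x => (hS _).exists_eq_comp_right (hT _) (hT _) hle hu x)
    (eS.inv ≫ tw.θ F ≫ e.hom)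
  exact ⟨{
    k, deg, S, T
    card_deg := hdeg
    isShift_S := hS
    isShift_T := hT
    θ := a.hom ≫ (eS.inv ≫ tw.θ F ≫ e.hom) ≫ b.hom
    isMonomial := hθ
    ι := b.inv ≫ e.inv ≫ tw.ι F
    π := tw.π F ≫ eS.hom⟦(1 : ℤ)⟧' ≫ a.inv⟦(1 : ℤ)⟧'
    distinguished := distinguished_of_iso (tw.innerTri F) (eS ≪≫ a.symm) (e ≪≫ b) (Iso.refl _)
      (by simp) (by simp) (by simp) }⟩

namespace MonomialPresentation

variable {tw} (M : tw.MonomialPresentation tw.E)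

theorem exists_deg_eq_neg (i : Fin M.k) : ∃ m : ℕ, m ≤ d ∧ M.deg i = -(2 * (m : ℤ)) := by
  have : Nontrivial (tw.E ⟶ tw.E⟦-M.deg i⟧) := by
    refine Module.nontrivial_of_finrank_pos (R := ℂ) ?_
    rw [← M.card_deg]
    exact Finset.card_pos.2 ⟨i, by simp⟩
  obtain ⟨f, hf⟩ := exists_ne (0 : tw.E ⟶ tw.E⟦-M.deg i⟧)
  obtain ⟨m, hm, h⟩ := tw.exists_eq_two_mul hf
  exact ⟨m, hm, by rw [← h, neg_neg]⟩

theorem exists_deg_eq_neg_of_le {m : ℕ} (hm : m ≤ d) : ∃ i, M.deg i = -(2 * (m : ℤ)) := by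
  have h := M.card_deg (2 * m)
  rw [tw.hom_rank_one m hm] at h
  obtain ⟨i, hi⟩ := Finset.card_pos.1 (h ▸ one_pos)
  exact ⟨i, (Finset.mem_filter.1 hi).2⟩

end MonomialPresentation

theorem exists_ne_zero_to_P_obj_E :
    ∃ W : D, tw.IsShift W (-4 * d) ∧ ∃ z : W ⟶ tw.P.functor.obj tw.E, z ≠ 0 := by
  obtain ⟨M⟩ := tw.nonempty_monomialPresentation tw.E
  obtain ⟨j, hj⟩ := M.exists_deg_eq_neg_of_le le_rfl
  have hW := tw.isShift_shift (-4 * d - 2)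
  obtain ⟨u, hu⟩ := hW.exists_ne_zero (M.isShift_S j) le_rfl (by rw [hj]; ring)
  have hθ : (u ≫ biproduct.ι M.S j) ≫ M.θ = 0 := biproduct.hom_ext _ _ fun i => by
    rw [zero_comp]
    by_contra hne
    obtain ⟨m, hm, h⟩ := hW.exists_eq_two_mul_add (M.isShift_T i) hne
    obtain ⟨m', hm', h'⟩ := M.exists_deg_eq_neg i
    omega
  obtain ⟨y, hy⟩ := exists_comp_eq_map_shift M.distinguished hθ
  have hev : y ≫ tw.ev tw.E = 0 := by
    by_contra hne
    obtain ⟨m, -, h⟩ := (hW.shift 1).exists_eq_two_mul_add tw.isShift_self hne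
    omega
  obtain ⟨z, hz⟩ := exists_comp_eq_map_shift (tw.outerTri tw.E) hev
  have hW' : tw.IsShift (tw.E⟦(-4 * d - 2 : ℤ)⟧⟦(1 : ℤ)⟧⟦(1 : ℤ)⟧) (-4 * d) := by
    convert (hW.shift 1).shift 1 using 1
    ring
  refine ⟨_, hW', z, ?_⟩
  rintro rfl
  have hy0 : y = 0 := (shiftFunctor D (1 : ℤ)).map_injective <| by
    rw [← hz, zero_comp, Functor.map_zero]
  have huι : u ≫ biproduct.ι M.S j = 0 := (shiftFunctor D (1 : ℤ)).map_injective <| by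
    rw [← hy, hy0, zero_comp, Functor.map_zero]
  exact hu (by simpa using huι =≫ biproduct.π M.S j)

theorem isIso_of_ne_zero_P_obj {X : D} {a : ℤ} (hX : tw.IsShift X a)
    (f : tw.P.functor.obj X ⟶ tw.P.functor.obj X) (hf : f ≠ 0) : IsIso f := by
  obtain ⟨f, rfl⟩ := tw.P.functor.map_surjective f
  have := hX.isIso_of_ne_zero hX (x := f) (by rintro rfl; exact hf (Functor.map_zero _ _ _))
  infer_instance

theorem nonempty_iso_P_obj_E_of_retract {V : D} (r : Retract V (tw.T tw.E)) (hV : ¬IsZero V)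
    (hVE : ∀ x : V ⟶ tw.E, x = 0) : Nonempty (V⟦(1 : ℤ)⟧ ≅ tw.P.functor.obj tw.E) := by
  obtain ⟨z, hz⟩ := exists_comp_eq_map_shift (tw.outerTri tw.E) (hVE (r.i ≫ tw.ev tw.E))
  have hr : z ≫ tw.dl tw.E ≫ r.r⟦(1 : ℤ)⟧' = 𝟙 _ := by
    rw [reassoc_of% hz, ← Functor.map_comp, r.retract, CategoryTheory.Functor.map_id]
  have hV1 : ¬IsZero (V⟦(1 : ℤ)⟧) := fun h => hV <|
    (IsZero.iff_id_eq_zero V).2 <| (shiftFunctor D (1 : ℤ)).map_injective (h.eq_of_src _ _)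
  exact nonempty_iso_of_retract ⟨z, _, hr⟩ hV1 (tw.isIso_of_ne_zero_P_obj tw.isShift_self)

namespace MonomialPresentation

variable {tw} (M : tw.MonomialPresentation tw.E)

theorem isShift_P_obj_E_of_ι_comp_eq_zero {i : Fin M.k} (hi : biproduct.ι M.S i ≫ M.θ = 0) :
    tw.IsShift (tw.P.functor.obj tw.E) (-2 * d) := by
  obtain ⟨y, hy⟩ := exists_comp_eq_map_shift M.distinguished hi
  have hr : y ≫ M.π ≫ (biproduct.π M.S i)⟦(1 : ℤ)⟧' = 𝟙 _ := by
    rw [reassoc_of% hy, ← Functor.map_comp, biproduct.ι_π_self, CategoryTheory.Functor.map_id]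
  obtain ⟨m, hm, hdeg⟩ := M.exists_deg_eq_neg i
  have hS := (M.isShift_S i).shift 1
  obtain ⟨e⟩ := tw.nonempty_iso_P_obj_E_of_retract ⟨y, _, hr⟩ hS.not_isZero fun x => by
    by_contra hx
    obtain ⟨n, -, h⟩ := hS.exists_eq_two_mul_add tw.isShift_self hx
    omega
  have hP := (hS.shift 1).of_iso e
  obtain ⟨W, hW, z, hz⟩ := tw.exists_ne_zero_to_P_obj_E
  obtain ⟨n, hn, h⟩ := hW.exists_eq_two_mul_add hP hz
  convert hP using 1
  omega

theorem exists_ι_comp_eq_zero : ∃ i, biproduct.ι M.S i ≫ M.θ = 0 := by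
  refine (M.isMonomial.exists_ι_comp_eq_zero_or le_rfl).resolve_right fun hall => ?_
  obtain ⟨j, hj⟩ := M.exists_deg_eq_neg_of_le (Nat.zero_le d)
  obtain ⟨i, hij⟩ := hall j
  obtain ⟨m, -, hdeg⟩ := M.exists_deg_eq_neg i
  have hS := M.isShift_S i
  have hT := M.isShift_T j
  obtain ⟨m', hm', hdeg'⟩ := hS.exists_eq_two_mul_add hT hij
  obtain ⟨Z, v, w, hZ⟩ := distinguished_cocone_triangle (biproduct.components M.θ i j)
  let r : RetractArrow (biproduct.components M.θ i j) M.θ :=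
    { i := Arrow.homMk (biproduct.ι M.S i) (biproduct.ι M.T j) (M.isMonomial.ι_comp hij)
      r := Arrow.homMk (biproduct.π M.S i) (biproduct.π M.T j) (M.isMonomial.comp_π hij).symm
      retract := by ext <;> exact biproduct.ι_π_self _ _ }
  obtain ⟨rZ⟩ := nonempty_retract_of_retractArrow hZ M.distinguished r
  obtain ⟨e⟩ := tw.nonempty_iso_P_obj_E_of_retract rZ
    (hS.not_isZero_of_distinguished hT (by omega) hZ)
    (hS.eq_zero_of_distinguished hT (by simpa [hj] using tw.isShift_self) hij hZ)
  obtain ⟨W, hW, z, hz⟩ := tw.exists_ne_zero_to_P_obj_E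
  have hext : IsExtension ((M.T j)⟦(1 : ℤ)⟧) (Z⟦(1 : ℤ)⟧) ((M.S i)⟦(1 : ℤ)⟧⟦(1 : ℤ)⟧) :=
    (IsExtension.rotate_iff.2 ⟨_, _, _, hZ⟩).map_shift 1
  have hWZ : z ≫ e.inv = 0 := by
    refine hext.eq_zero_of_forall_eq_zero (fun x => ?_) (fun x => ?_) _
    · by_contra hx
      obtain ⟨n, -, h⟩ := hW.exists_eq_two_mul_add (hT.shift 1) hx
      omega
    · by_contra hx
      obtain ⟨n, hn, h⟩ := hW.exists_eq_two_mul_add ((hS.shift 1).shift 1) hx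
      omega
  exact hz (by simpa using hWZ =≫ e.hom)

end MonomialPresentation

theorem isShift_P_obj_E : tw.IsShift (tw.P.functor.obj tw.E) (-2 * d) := by
  obtain ⟨M⟩ := tw.nonempty_monomialPresentation tw.E
  obtain ⟨i, hi⟩ := M.exists_ι_comp_eq_zero
  exact M.isShift_P_obj_E_of_ι_comp_eq_zero hi

theorem isShift_P_obj {X : D} {a : ℤ} (hX : tw.IsShift X a) :
    tw.IsShift (tw.P.functor.obj X) (a + -2 * d) := by
  obtain ⟨e⟩ := hX
  have hE := tw.isShift_P_obj_E.shift a
  rw [add_comm] at hE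
  exact hE.of_iso ((tw.P.functor.commShiftIso a).symm.app tw.E ≪≫ tw.P.functor.mapIso e.symm)

variable [∀ X Y : D, Module.Finite ℂ (X ⟶ Y)] (F : D)

theorem nonempty_P_obj_T_iso : Nonempty (tw.P.functor.obj (tw.T F) ≅ (tw.T F)⟦(-2 * d : ℤ)⟧) := by
  obtain ⟨M⟩ := tw.nonempty_monomialPresentation F
  obtain ⟨e⟩ := M.isMonomial.nonempty_arrow_iso tw.P.functor (shiftFunctor D (-2 * d : ℤ))
    (fun i => tw.isShift_P_obj (M.isShift_S i)) (fun i => (M.isShift_S i).shift _)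
    (fun i => tw.isShift_P_obj (M.isShift_T i)) (fun i => (M.isShift_T i).shift _)
  exact nonempty_iso_of_map_arrow_iso ℂ _ _ (tw.P.functor.commShiftIso 1)
    (shiftFunctorComm D 1 (-2 * d : ℤ)) M.distinguished e

theorem nonempty_P_obj_T_shift_iso {m n : ℤ} (hmn : -2 * d + m = n) :
    Nonempty (tw.P.functor.obj ((tw.T F)⟦m⟧) ≅ (tw.T F)⟦n⟧) := by
  obtain ⟨e⟩ := tw.nonempty_P_obj_T_iso F
  exact ⟨(tw.P.functor.commShiftIso m).app (tw.T F) ≪≫ (shiftFunctor D m).mapIso e ≪≫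
    (shiftFunctorAdd' D _ m n hmn).symm.app (tw.T F)⟩

theorem isExtension_iterate (k : ℕ) :
    IsExtension ((fun X => tw.P.functor.obj X)^[k] F) ((fun X => tw.P.functor.obj X)^[k + 1] F)
      ((tw.T F)⟦(-2 * d * k + 1 : ℤ)⟧) := by
  induction k with
  | zero => simpa using IsExtension.rotate_iff.2 ⟨_, _, _, tw.outerTri F⟩
  | succ k ih =>
    obtain ⟨e⟩ := tw.nonempty_P_obj_T_shift_iso F (m := -2 * d * k + 1)
      (n := -2 * d * (k + 1 : ℕ) + 1) (by push_cast; ring)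
    simpa only [Function.iterate_succ_apply'] using
      (ih.map ℂ tw.P.functor (tw.P.functor.commShiftIso 1)).of_iso (Iso.refl _) (Iso.refl _) e

variable {G : D} {t r : ℝ}

theorem mem_complexitySet_iterate (hr : r ∈ complexitySet D G (tw.T G) t) (n : ℕ) :
    1 + r * ∑ k ∈ Finset.range n, Real.exp ((-2 * (d : ℝ) * k + 1) * t) ∈
      complexitySet D G ((fun X => tw.P.functor.obj X)^[n] G) t := by
  induction n with
  | zero => simpa using one_mem_complexitySet_self
  | succ n ih =>
    have h := add_mem_complexitySet ℂ ih (complexitySet_map_shift hr _)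
      (tw.isExtension_iterate G n)
    rw [Finset.sum_range_succ, mul_add, ← add_assoc]
    exact_mod_cast h

end PdTwist

theorem complexity_iterate_le_general (d : ℕ) (tw : PdTwist C d) (G : C)
    (hG : InSplitClosure C G (tw.T G)) (n : ℕ) (t : ℝ) :
    complexity C G ((fun X => tw.P.functor.obj X)^[n] G) t
      ≤ 1 + complexity C G (tw.T G) t *
          ∑ k ∈ Finset.range n, Real.exp ((-2 * (d : ℝ) * k + 1) * t) :=
  complexity_le_add_mul hG (Finset.sum_nonneg fun _ _ => (Real.exp_pos _).le)
    fun _ hr => tw.mem_complexitySet_iterate hr n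

/-- With `A := Cone(Hom^{*-2}(ℰ,G) ⊗ ℰ → Hom^*(ℰ,G) ⊗ ℰ)` (the inner cone
`T G` of the twist construction at the split generator `G`), for every `n ≥ 1` and `t ∈ ℝ`:
`δ_t(G, P_ℰ^n(G)) ≤ 1 + δ_t(G, A) · ∑_{k=0}^{n-1} e^{(-2dk+1)t}`. -/
theorem complexity_iterate_le (d : ℕ) (tw : PdTwist C d)
    (G : C) (hG : IsSplitGenerator C G) (n : ℕ) (hn : 1 ≤ n) (t : ℝ) :
    complexity C G ((fun X => tw.P.functor.obj X)^[n] G) t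
      ≤ 1 + complexity C G (tw.T G) t *
          ∑ k ∈ Finset.range n, Real.exp ((-2 * (d : ℝ) * k + 1) * t) :=
  complexity_iterate_le_general C d tw G (hG _) n t
end
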